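/- arXiv:1804.04967 — 11 statements merged into one kernel-verified Lean document; each statement's English description precedes it below -/
import Mathlib

section
/- Every sequence over a finite semigroup has a Ramseyan factorisation. -/
namespace Buechi

/-- Nonempty finite strings over `α`, given as a head together with a tail. -/
abbrev NStr (α : Type*) : Type _ := α × List α

/-- The list of symbols of a nonempty string. -/
def NStr.toList {α : Type*} (s : NStr α) : List α := s.1 :: s.2

/-- The color of a nonempty string over a semigroup: the product of its symbols. -/
def col {Γ : Type*} [Semigroup Γ] (s : NStr Γ) : Γ := s.2.foldl (· * ·) s.1

/-- The string `σ[i,j) = σ i, σ (i+1), …, σ (j-1)` (meaningful for `i < j`). -/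
def seg {α : Type*} (σ : ℕ → α) (i j : ℕ) : NStr α :=
  (σ i, (List.range' (i + 1) (j - i - 1)).map σ)

/-- Starting position of the `n`-th factor of a factorisation `τ`. -/
def facStart {α : Type*} (τ : ℕ → NStr α) : ℕ → ℕ
  | 0 => 0
  | n + 1 => facStart τ n + (τ n).toList.length

/-- `τ` is a factorisation of `σ`: `σ` equals the infinite concatenation
`(τ 0)(τ 1)(τ 2)⋯`. -/
def IsFactorisation {α : Type*} (τ : ℕ → NStr α) (σ : ℕ → α) : Prop :=
  ∀ (n k : ℕ) (h : k < (τ n).toList.length),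
    (τ n).toList.get ⟨k, h⟩ = σ (facStart τ n + k)

/-- A Ramseyan factorisation of `σ`: a factorisation all of whose factors
`τ 1, τ 2, τ 3, …` have the same color. -/
def IsRamseyanFactorisation {Γ : Type*} [Semigroup Γ] (τ : ℕ → NStr Γ) (σ : ℕ → Γ) : Prop :=
  IsFactorisation τ σ ∧ ∃ c : Γ, ∀ n ≥ 1, col (τ n) = c

/-- Weak infinite Ramsey statement: consecutive pairs get the same color. -/
theorem exists_consecutive_homogeneous {Γ : Type*} [Finite Γ] (f : ℕ → ℕ → Γ) :
    ∃ (s : ℕ → ℕ) (c : Γ), 0 < s 0 ∧ ∀ n, s n < s (n + 1) ∧ f (s n) (s (n + 1)) = c := by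
  have key : ∀ g : ℕ → Γ, ∃ c, ∀ᶠ j in (Filter.hyperfilter ℕ : Filter ℕ), g j = c := by
    intro g
    obtain ⟨c, hc⟩ := Ultrafilter.eq_pure_of_finite ((Filter.hyperfilter ℕ).map g)
    refine ⟨c, ?_⟩
    have h1 : ({c} : Set Γ) ∈ (Filter.hyperfilter ℕ).map g := by
      rw [hc]; exact Ultrafilter.mem_pure.2 rfl
    exact h1
  have hgt : ∀ i : ℕ, ∀ᶠ j in (Filter.hyperfilter ℕ : Filter ℕ), i < j := by
    intro i
    have h1 := Filter.eventually_gt_atTop i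
    rw [← Nat.cofinite_eq_atTop] at h1
    exact Filter.hyperfilter_le_cofinite h1
  choose d hd using fun i => key (f i)
  obtain ⟨c, hc⟩ := key d
  have step : ∀ i : {i : ℕ // d i = c}, ∃ j : {i : ℕ // d i = c},
      i.1 < j.1 ∧ f i.1 j.1 = c := by
    rintro ⟨i, hi⟩
    obtain ⟨j, hj1, hj2, hj3⟩ := ((hgt i).and ((hd i).and hc)).exists
    exact ⟨⟨j, hj3⟩, hj1, hj2.trans hi⟩
  choose nx hnx using step
  obtain ⟨i0, h0, h0c⟩ := ((hgt 0).and hc).exists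
  exact ⟨fun n => (Nat.rec ⟨i0, h0c⟩ (fun _ x => nx x) n : {i : ℕ // d i = c}).1, c, h0,
    fun n => hnx _⟩

/-- Every sequence over a finite semigroup has a Ramseyan factorisation. -/
theorem ramseyan_factorisation_exists {Γ : Type*} [Fintype Γ] [Semigroup Γ]
    (σ : ℕ → Γ) :
    ∃ τ : ℕ → NStr Γ, IsRamseyanFactorisation τ σ := by
  obtain ⟨s, c, h0, hs⟩ := exists_consecutive_homogeneous (fun i j => col (seg σ i j))
  let t : ℕ → ℕ := fun n => Nat.casesOn n 0 s
  have ht : ∀ n, t n < t (n + 1) := by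
    intro n
    cases n with
    | zero => exact h0
    | succ n => exact (hs n).1
  have hlen : ∀ n, (NStr.toList (seg σ (t n) (t (n + 1)))).length = t (n + 1) - t n := by
    intro n
    have := ht n
    simp only [NStr.toList, seg, List.length_cons, List.length_map, List.length_range']
    omega
  have hst : ∀ n, facStart (fun n => seg σ (t n) (t (n + 1))) n = t n := by
    intro n
    induction n with
    | zero => rfl
    | succ n ih =>
      have := ht n
      rw [facStart, ih, hlen]
      omega
  refine ⟨fun n => seg σ (t n) (t (n + 1)), ?_, c, ?_⟩
  · intro n k h
    rw [hst]
    cases k with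
    | zero => rfl
    | succ k =>
      simp only [NStr.toList, seg, List.get_eq_getElem, List.getElem_cons_succ,
        List.getElem_map, List.getElem_range']
      congr 1
      omega
  · intro n hn
    cases n with
    | zero => omega
    | succ n => exact (hs n).2

end Buechi
end

section
/- If a sequence σ over a finite semigroup Γ has a Ramseyan factorisation, then σ has a Ramseyan factorisation whose color c is idempotent, i.e. c + c = c. -/
namespace Buechi

/-- Concatenation of two nonempty strings. -/
def app {α : Type*} (s t : NStr α) : NStr α := (s.1, s.2 ++ t.toList)

theorem app_toList {α : Type*} (s t : NStr α) :
    (app s t).toList = s.toList ++ t.toList := by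
  simp [app, NStr.toList]

theorem foldl_mul_assoc {Γ : Type*} [Semigroup Γ] (l : List Γ) (a b : Γ) :
    l.foldl (· * ·) (a * b) = a * l.foldl (· * ·) b := by
  induction l generalizing b with
  | nil => rfl
  | cons x l ih => simp only [List.foldl_cons, mul_assoc, ih]

theorem col_app {Γ : Type*} [Semigroup Γ] (s t : NStr Γ) :
    col (app s t) = col s * col t := by
  simp only [col, app, NStr.toList, List.foldl_append, List.foldl_cons, foldl_mul_assoc]

/-- Concatenation of the factors `τ i, …, τ (i + m)`. -/
def cat {α : Type*} (τ : ℕ → NStr α) (i : ℕ) : ℕ → NStr α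
  | 0 => τ i
  | m + 1 => app (cat τ i m) (τ (i + m + 1))

/-- `pw c m` is the power of `c` with exponent `m + 1`. -/
def pw {Γ : Type*} [Semigroup Γ] (c : Γ) : ℕ → Γ
  | 0 => c
  | m + 1 => pw c m * c

theorem pw_mul {Γ : Type*} [Semigroup Γ] (c : Γ) (a b : ℕ) :
    pw c a * pw c b = pw c (a + b + 1) := by
  induction b with
  | zero => rfl
  | succ b ih =>
    change pw c a * (pw c b * c) = pw c (a + b + 1) * c
    rw [← mul_assoc, ih]

theorem exists_idem {Γ : Type*} [Fintype Γ] [Semigroup Γ] (c : Γ) :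
    ∃ m, pw c m * pw c m = pw c m := by
  let : TopologicalSpace Γ := ⊥
  have : DiscreteTopology Γ := ⟨rfl⟩
  obtain ⟨x, ⟨m, rfl⟩, hx⟩ := exists_idempotent_in_compact_subsemigroup
    (fun r : Γ => continuous_of_discreteTopology) (Set.range (pw c)) ⟨_, 0, rfl⟩
    (Set.toFinite _).isCompact (by
      rintro _ ⟨a, rfl⟩ _ ⟨b, rfl⟩
      exact ⟨_, (pw_mul c a b).symm⟩)
  exact ⟨m, hx⟩

theorem cat_col {Γ : Type*} [Semigroup Γ] (τ : ℕ → NStr Γ) (c : Γ)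
    (hc : ∀ n ≥ 1, col (τ n) = c) (i : ℕ) (hi : 1 ≤ i) (m : ℕ) :
    col (cat τ i m) = pw c m := by
  induction m with
  | zero => exact hc i hi
  | succ m ih =>
    change col (app _ _) = pw c m * c
    rw [col_app, ih, hc _ (by omega)]

theorem cat_length {α : Type*} (τ : ℕ → NStr α) (i m : ℕ) :
    facStart τ i + (cat τ i m).toList.length = facStart τ (i + m + 1) := by
  induction m with
  | zero => rfl
  | succ m ih =>
    change _ + (app _ _).toList.length = facStart τ (i + m + 1) + _
    rw [app_toList, List.length_append, ← ih, ← add_assoc]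
    rfl

theorem cat_get {α : Type*} (τ : ℕ → NStr α) (σ : ℕ → α) (hτ : IsFactorisation τ σ)
    (i m k : ℕ) (h : k < (cat τ i m).toList.length) :
    (cat τ i m).toList[k] = σ (facStart τ i + k) := by
  induction m generalizing k with
  | zero => exact hτ i k h
  | succ m ih =>
    have e : (cat τ i (m + 1)).toList = (cat τ i m).toList ++ (τ (i + m + 1)).toList :=
      app_toList _ _
    have h2 := h
    rw [e, List.length_append] at h2
    simp only [e]
    rw [List.getElem_append]
    split_ifs with hk
    · exact ih k hk
    · have := hτ (i + m + 1) (k - (cat τ i m).toList.length) (by omega)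
      rw [List.get_eq_getElem] at this
      simp only at this
      rw [this, ← cat_length]
      congr 1
      omega

/-- Grouping the factors after the first into blocks of `m + 1`. -/
def grp {α : Type*} (τ : ℕ → NStr α) (m : ℕ) : ℕ → NStr α
  | 0 => τ 0
  | n + 1 => cat τ (1 + n * (m + 1)) m

theorem grp_start {α : Type*} (τ : ℕ → NStr α) (m n : ℕ) :
    facStart (grp τ m) (n + 1) = facStart τ (1 + n * (m + 1)) := by
  induction n with
  | zero => simp [facStart, grp]
  | succ n ih =>
    change facStart (grp τ m) (n + 1) + (cat τ (1 + n * (m + 1)) m).toList.length = _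
    rw [ih, cat_length]
    congr 1
    ring

/-- If a sequence over a finite semigroup has a Ramseyan factorisation, then it
has one whose color is idempotent. -/
theorem ramseyan_factorisation_idempotent {Γ : Type*} [Fintype Γ] [Semigroup Γ]
    (σ : ℕ → Γ) (h : ∃ τ : ℕ → NStr Γ, IsRamseyanFactorisation τ σ) :
    ∃ τ : ℕ → NStr Γ, IsFactorisation τ σ ∧
      ∃ c : Γ, c * c = c ∧ ∀ n ≥ 1, col (τ n) = c := by
  obtain ⟨τ, hτ, c, hc⟩ := h
  obtain ⟨m, hm⟩ := exists_idem c
  refine ⟨grp τ m, ?_, pw c m, hm, ?_⟩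
  · intro n k hk
    cases n with
    | zero => exact hτ 0 k hk
    | succ n =>
      rw [grp_start]
      exact cat_get τ σ hτ _ m k hk
  · intro n hn
    cases n with
    | zero => omega
    | succ n => exact cat_col τ c hc _ (by omega) m

end Buechi
end

section
/- Ramseyan pigeonhole principle: for every sequence σ over a finite semigroup Γ there exists a position i such that for every k there exists j ≥ k with i merging with j in σ (i.e., i has an infinite merging class). -/
namespace Buechi

/-- Position `i` merges with position `j` in `σ`: there is a `k` with `i < k`,
`j < k` and `col σ[i,k) = col σ[j,k)`. -/
def Merges {Γ : Type*} [Semigroup Γ] (σ : ℕ → Γ) (i j : ℕ) : Prop :=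
  ∃ k, i < k ∧ j < k ∧ col (seg σ i k) = col (seg σ j k)

/-- Ramseyan pigeonhole principle: every sequence over a finite semigroup has a
position with an infinite merging class. -/
theorem ramseyan_pigeonhole {Γ : Type*} [Fintype Γ] [Semigroup Γ] (σ : ℕ → Γ) :
    ∃ i : ℕ, ∀ k : ℕ, ∃ j : ℕ, k ≤ j ∧ Merges σ i j := by
  classical
  by_contra hc
  push Not at hc
  choose b hb using hc
  obtain ⟨f, -, hf⟩ := exists_seq_of_forall_finset_exists (fun _ : ℕ => True)
    (fun i j => ¬ Merges σ i j) (fun s _ =>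
      ⟨s.sup b, trivial, fun x hx => hb x _ (Finset.le_sup (f := b) hx)⟩)
  let N := Fintype.card Γ + 1
  let K := (Finset.range N).sup f + 1
  have hK : ∀ m < N, f m < K := fun m hm =>
    Nat.lt_succ_of_le (Finset.le_sup (f := f) (Finset.mem_range.mpr hm))
  obtain ⟨x, y, hxy, he⟩ := Fintype.exists_ne_map_eq_of_card_lt
    (fun m : Fin N => col (seg σ (f m) K)) (by simp [N])
  rcases lt_or_gt_of_ne hxy with h | h
  · exact hf x y h ⟨K, hK x x.2, hK y y.2, he⟩
  · exact hf y x h ⟨K, hK y y.2, hK x x.2, he.symm⟩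

end Buechi
end

section
/- Let σ be a sequence over a finite semigroup Γ, let k be at least the number of elements of Γ, and let n₀ < n₁ < ⋯ < n_k be natural numbers. Then there exist indices i < j ≤ k such that n_i merges with n_j in σ. -/
namespace Buechi

/-- Among `k + 1` increasing positions `n 0 < n 1 < ⋯ < n k` with
`k ≥ |Γ|`, two of them merge in `σ`. -/
theorem merging_positions_exist {Γ : Type*} [Fintype Γ] [Semigroup Γ]
    (σ : ℕ → Γ) (k : ℕ) (hk : Fintype.card Γ ≤ k)
    (n : ℕ → ℕ) (hmono : ∀ i, i < k → n i < n (i + 1)) :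
    ∃ i j : ℕ, i < j ∧ j ≤ k ∧ Merges σ (n i) (n j) := by
  have hle : ∀ d i, i + d ≤ k → n i ≤ n (i + d) := by
    intro d
    induction d with
    | zero => intro i _; exact le_refl _
    | succ d ih =>
      intro i h
      have h1 := ih i (by omega)
      have h2 := hmono (i + d) (by omega)
      have h3 : i + (d + 1) = i + d + 1 := by omega
      rw [h3]
      omega
  have hlt : ∀ i, i ≤ k → n i < n k + 1 := by
    intro i hi
    have h := hle (k - i) i (by omega)
    have h3 : i + (k - i) = k := by omega
    rw [h3] at h
    omega
  obtain ⟨a, b, hab, hf⟩ := Fintype.exists_ne_map_eq_of_card_lt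
    (fun i : Fin (k + 1) => col (seg σ (n i) (n k + 1))) (by simp; omega)
  have ha := hlt a (by omega)
  have hb := hlt b (by omega)
  rcases lt_or_gt_of_ne hab with h | h
  · exact ⟨a, b, h, by omega, n k + 1, ha, hb, hf⟩
  · exact ⟨b, a, h, by omega, n k + 1, hb, ha, hf.symm⟩

end Buechi
end

section
/- For any two Büchi automata A and B over a finite alphabet Σ there exists a Büchi automaton C over Σ such that (1) for every sequence σ : ℕ → Σ, C accepts σ if and only if A accepts σ and B accepts σ, and (2) every match of C is both a match of A and a match of B. -/
namespace Buechi

/-- Büchi automata over alphabet `α`: a finite type of states, a transition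
relation, initial states and accepting states. -/
structure BA (α : Type*) where
  Q : Type
  fin : Fintype Q
  trans : Q → α → Q → Prop
  init : Q → Prop
  accept : Q → Prop

/-- Büchi acceptance: there is a run starting in an initial state, respecting the
transition relation, and visiting accepting states infinitely often. -/
def BA.Accepts {α : Type*} (M : BA α) (σ : ℕ → α) : Prop :=
  ∃ ρ : ℕ → M.Q, M.init (ρ 0) ∧ (∀ n, M.trans (ρ n) (σ n) (ρ (n + 1))) ∧
    ∀ k, ∃ n, k ≤ n ∧ M.accept (ρ n)

/-- `M.StepsL p x q`: there is a path on the list `x` from `p` to `q` whose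
consecutive transitions are labelled by the successive symbols of `x`. -/
def BA.StepsL {α : Type*} (M : BA α) : M.Q → List α → M.Q → Prop
  | p, [], q => p = q
  | p, a :: x, q => ∃ r, M.trans p a r ∧ M.StepsL r x q

/-- `M.StepsAccL p x q`: there is a path on `x` from `p` to `q` passing through an
accepting state before its last position. -/
def BA.StepsAccL {α : Type*} (M : BA α) : M.Q → List α → M.Q → Prop
  | _, [], _ => False
  | p, a :: x, q => ∃ r, M.trans p a r ∧ ((M.accept p ∧ M.StepsL r x q) ∨ M.StepsAccL r x q)

/-- `p ⇒x q` for a nonempty string `x`. -/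
def BA.Steps {α : Type*} (M : BA α) (p : M.Q) (x : NStr α) (q : M.Q) : Prop :=
  M.StepsL p x.toList q

/-- `p ⇒x! q` for a nonempty string `x`. -/
def BA.StepsAcc {α : Type*} (M : BA α) (p : M.Q) (x : NStr α) (q : M.Q) : Prop :=
  M.StepsAccL p x.toList q

/-- `(x, y)` is a match of `M`: there are states `p`, `q` with `p` initial,
`p ⇒x q` and `q ⇒y! q`. -/
def BA.IsMatch {α : Type*} (M : BA α) (x y : NStr α) : Prop :=
  ∃ p q, M.init p ∧ M.Steps p x q ∧ M.StepsAcc q y q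

/-- The ultimately periodic sequence `x·y^ω = x y y y ⋯`. -/
def upSeq {α : Type*} (x y : NStr α) (n : ℕ) : α :=
  if h : n < x.toList.length then x.toList.get ⟨n, h⟩
  else y.toList.get ⟨(n - x.toList.length) % y.toList.length,
    Nat.mod_lt _ (by simp [NStr.toList])⟩

/-- The product automaton with a phase bit: `false` waits for `A`, `true` waits for `B`. -/
def interBA {α : Type*} (A B : BA α) : BA α where
  Q := A.Q × B.Q × Bool
  fin := by
    haveI := A.fin
    haveI := B.fin
    infer_instance
  trans s a t := A.trans s.1 a t.1 ∧ B.trans s.2.1 a t.2.1 ∧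
    (t.2.2 = true ↔ ((s.2.2 = true ∧ ¬ B.accept s.2.1) ∨ (s.2.2 = false ∧ A.accept s.1)))
  init s := A.init s.1 ∧ B.init s.2.1 ∧ s.2.2 = false
  accept s := A.accept s.1 ∧ s.2.2 = false

theorem inter_stepsL {α : Type*} (A B : BA α) (x : List α) :
    ∀ s t : A.Q × B.Q × Bool, (interBA A B).StepsL s x t →
      A.StepsL s.1 x t.1 ∧ B.StepsL s.2.1 x t.2.1 := by
  induction x with
  | nil => intro s t h; cases h; exact ⟨rfl, rfl⟩
  | cons a x ih =>
    rintro s t ⟨r, hr, h⟩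
    obtain ⟨h1, h2⟩ := ih r t h
    exact ⟨⟨r.1, hr.1, h1⟩, ⟨r.2.1, hr.2.1, h2⟩⟩

theorem inter_accA {α : Type*} (A B : BA α) (x : List α) :
    ∀ s t : A.Q × B.Q × Bool, (interBA A B).StepsAccL s x t → A.StepsAccL s.1 x t.1 := by
  induction x with
  | nil => intro s t h; exact h.elim
  | cons a x ih =>
    rintro s t ⟨r, hr, h | h⟩
    · exact ⟨r.1, hr.1, Or.inl ⟨h.1.1, (inter_stepsL A B x r t h.2).1⟩⟩
    · exact ⟨r.1, hr.1, Or.inr (ih r t h)⟩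

theorem inter_accB1 {α : Type*} (A B : BA α) (x : List α) :
    ∀ s t : A.Q × B.Q × Bool, (interBA A B).StepsL s x t → s.2.2 = true → t.2.2 = false →
      B.StepsAccL s.2.1 x t.2.1 := by
  induction x with
  | nil => intro s t h h1 h2; cases h; simp [h1] at h2
  | cons a x ih =>
    rintro s t ⟨r, hr, h⟩ h1 h2
    refine ⟨r.2.1, hr.2.1, ?_⟩
    by_cases hb : B.accept s.2.1
    · exact Or.inl ⟨hb, (inter_stepsL A B x r t h).2⟩
    · exact Or.inr (ih r t h (hr.2.2.2 (Or.inl ⟨h1, hb⟩)) h2)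

theorem inter_accB2 {α : Type*} (A B : BA α) (x : List α) :
    ∀ s t : A.Q × B.Q × Bool, (interBA A B).StepsAccL s x t → s.2.2 = true →
      (interBA A B).StepsL s x t ∧ B.StepsAccL s.2.1 x t.2.1 := by
  have aux : ∀ (x : List α) (s t : A.Q × B.Q × Bool), (interBA A B).StepsAccL s x t →
      (interBA A B).StepsL s x t := by
    intro x
    induction x with
    | nil => intro s t h; exact h.elim
    | cons a x ih =>
      rintro s t ⟨r, hr, h | h⟩
      · exact ⟨r, hr, h.2⟩
      · exact ⟨r, hr, ih r t h⟩
  induction x with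
  | nil => intro s t h; exact h.elim
  | cons a x ih =>
    intro s t h h1
    refine ⟨aux _ _ _ h, ?_⟩
    obtain ⟨r, hr, h | h⟩ := h
    · have := h.1.2
      rw [h1] at this
      cases this
    · refine ⟨r.2.1, hr.2.1, ?_⟩
      by_cases hb : B.accept s.2.1
      · exact Or.inl ⟨hb, (inter_stepsL A B x r t (aux _ _ _ h)).2⟩
      · exact Or.inr (ih r t h (hr.2.2.2 (Or.inl ⟨h1, hb⟩))).2

theorem inter_accB3 {α : Type*} (A B : BA α) (x : List α) :
    ∀ s t : A.Q × B.Q × Bool, (interBA A B).StepsAccL s x t → s.2.2 = false →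
      t.2.2 = false → B.StepsAccL s.2.1 x t.2.1 := by
  induction x with
  | nil => intro s t h; exact h.elim
  | cons a x ih =>
    rintro s t ⟨r, hr, h | h⟩ h1 h2
    · exact ⟨r.2.1, hr.2.1,
        Or.inr (inter_accB1 A B x r t h.2 (hr.2.2.2 (Or.inr ⟨h1, h.1.1⟩)) h2)⟩
    · refine ⟨r.2.1, hr.2.1, Or.inr ?_⟩
      cases hb : r.2.2 with
      | true => exact (inter_accB2 A B x r t h hb).2
      | false => exact ih r t h hb h2

open Classical in
/-- The phase bit along a pair of runs. -/
noncomputable def phase {P R : Type*} (F : P → Prop) (G : R → Prop) (f : ℕ → P) (g : ℕ → R) :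
    ℕ → Bool
  | 0 => false
  | n + 1 => decide ((phase F G f g n = true ∧ ¬ G (g n)) ∨ (phase F G f g n = false ∧ F (f n)))

theorem inter_accepts {α : Type*} (A B : BA α) (σ : ℕ → α) :
    (interBA A B).Accepts σ ↔ A.Accepts σ ∧ B.Accepts σ := by
  constructor
  · rintro ⟨ρ, h0, ht, hacc⟩
    refine ⟨⟨fun n => (ρ n).1, h0.1, fun n => (ht n).1, fun k => ?_⟩,
      ⟨fun n => (ρ n).2.1, h0.2.1, fun n => (ht n).2.1, fun k => ?_⟩⟩
    · obtain ⟨n, hn, h⟩ := hacc k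
      exact ⟨n, hn, h.1⟩
    · by_contra hno
      push Not at hno
      obtain ⟨n, hn, h⟩ := hacc k
      have key : ∀ m, n + 1 ≤ m → (ρ m).2.2 = true := by
        intro m hm
        induction m, hm using Nat.le_induction with
        | base => exact (ht n).2.2.2 (Or.inr ⟨h.2, h.1⟩)
        | succ m hm ih => exact (ht m).2.2.2 (Or.inl ⟨ih, hno m (by omega)⟩)
      obtain ⟨m, hm, h'⟩ := hacc (n + 1)
      have h1 := key m hm
      have h2 : (ρ m).2.2 = false := h'.2
      rw [h1] at h2
      cases h2
  · rintro ⟨⟨f, f0, ft, fa⟩, ⟨g, g0, gt, ga⟩⟩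
    have hs : ∀ n, phase A.accept B.accept f g (n + 1) = true ↔
        ((phase A.accept B.accept f g n = true ∧ ¬ B.accept (g n)) ∨
          (phase A.accept B.accept f g n = false ∧ A.accept (f n))) := by
      intro n
      simp only [phase, decide_eq_true_eq]
    have h00 : phase A.accept B.accept f g 0 = false := rfl
    generalize phase A.accept B.accept f g = b at hs h00
    refine ⟨fun n => (f n, g n, b n), ⟨f0, g0, h00⟩, fun n => ⟨ft n, gt n, hs n⟩, fun k => ?_⟩
    by_contra hno
    have hno' : ∀ m, k ≤ m → b m = false → ¬ A.accept (f m) :=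
      fun m hm hb ha => hno ⟨m, hm, ha, hb⟩
    have hF : ∀ n, k ≤ n → b n ≠ false := by
      intro n hn hb
      have key : ∀ m, n ≤ m → b m = false := by
        intro m hm
        induction m, hm using Nat.le_induction with
        | base => exact hb
        | succ m hm ih =>
          have h1 := hs m
          have h2 := hno' m (by omega) ih
          simpa [ih, h2] using h1
      obtain ⟨m, hm, h⟩ := fa n
      exact hno' m (by omega) (key m hm) h
    obtain ⟨m, hm, h⟩ := ga k
    have h1 := hs m
    have h2 : b m = true := by simpa using hF m hm
    exact hF (m + 1) (by omega) (by simpa [h2, h] using h1)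

/-- Closure of Büchi automata under intersection, with the additional property
that every match of the intersection automaton is a match of both automata. -/
theorem intersection_automaton_exists {α : Type*} [Fintype α] (A B : BA α) :
    ∃ C : BA α,
      (∀ σ : ℕ → α, C.Accepts σ ↔ A.Accepts σ ∧ B.Accepts σ) ∧
      (∀ x y : NStr α, C.IsMatch x y → A.IsMatch x y ∧ B.IsMatch x y) := by
  refine ⟨interBA A B, inter_accepts A B, ?_⟩
  rintro x y ⟨p, q, hp, hx, hy⟩
  obtain ⟨h1, h2⟩ := inter_stepsL A B _ p q hx
  refine ⟨⟨p.1, q.1, hp.1, h1, inter_accA A B _ q q hy⟩, ⟨p.2.1, q.2.1, hp.2.1, h2, ?_⟩⟩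
  cases hb : q.2.2 with
  | true => exact (inter_accB2 A B _ q q hy hb).2
  | false => exact inter_accB3 A B _ q q hy hb hb

end Buechi
end

section
/- A Büchi automaton A over a finite alphabet Σ accepts some sequence if and only if A has a match; moreover, if (x, y) is a match of A then A accepts the ultimately periodic sequence x·y^ω. -/
namespace Buechi

theorem StepsL.path {α : Type*} (M : BA α) (l : List α) : ∀ p q, M.StepsL p l q →
    ∃ f : ℕ → M.Q, f 0 = p ∧ f l.length = q ∧
      ∀ i (h : i < l.length), M.trans (f i) (l[i]) (f (i + 1)) := by
  induction l with
  | nil =>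
    intro p q h
    exact ⟨fun _ => p, rfl, h, fun i h => absurd h (by simp)⟩
  | cons a l ih =>
    rintro p q ⟨r, h1, h2⟩
    obtain ⟨f, f0, fl, ft⟩ := ih r q h2
    refine ⟨fun n => Nat.casesOn n p f, rfl, fl, ?_⟩
    intro i hi
    cases i with
    | zero => simpa [f0] using h1
    | succ i => exact ft i (by simpa using hi)

theorem StepsAccL.path {α : Type*} (M : BA α) (l : List α) : ∀ p q, M.StepsAccL p l q →
    ∃ f : ℕ → M.Q, f 0 = p ∧ f l.length = q ∧
      (∀ i (h : i < l.length), M.trans (f i) (l[i]) (f (i + 1))) ∧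
      ∃ i < l.length, M.accept (f i) := by
  induction l with
  | nil =>
    intro p q h
    exact h.elim
  | cons a l ih =>
    rintro p q ⟨r, h1, h2⟩
    rcases h2 with ⟨ha, h2⟩ | h2
    · obtain ⟨f, f0, fl, ft⟩ := StepsL.path M l r q h2
      refine ⟨fun n => Nat.casesOn n p f, rfl, fl, ?_, 0, by simp, ha⟩
      intro i hi
      cases i with
      | zero => simpa [f0] using h1
      | succ i => exact ft i (by simpa using hi)
    · obtain ⟨f, f0, fl, ft, j, hj, hja⟩ := ih r q h2
      refine ⟨fun n => Nat.casesOn n p f, rfl, fl, ?_, j + 1, by simpa using hj, hja⟩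
      intro i hi
      cases i with
      | zero => simpa [f0] using h1
      | succ i => exact ft i (by simpa using hi)

theorem StepsL.of_run {α : Type*} (M : BA α) (σ : ℕ → α) (ρ : ℕ → M.Q)
    (h : ∀ n, M.trans (ρ n) (σ n) (ρ (n + 1))) (n : ℕ) :
    ∀ m, M.StepsL (ρ m) ((List.range' m n).map σ) (ρ (m + n)) := by
  induction n with
  | zero => intro m; rfl
  | succ n ih =>
    intro m
    refine ⟨ρ (m + 1), h m, ?_⟩
    have := ih (m + 1)
    rwa [show m + 1 + n = m + (n + 1) by omega] at this

theorem accepts_of_match {α : Type*} (A : BA α) (x y : NStr α) (h : A.IsMatch x y) :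
    A.Accepts (upSeq x y) := by
  obtain ⟨p, q, hp, hx, hy⟩ := h
  obtain ⟨f, f0, fl, ft⟩ := StepsL.path A _ _ _ hx
  obtain ⟨g, g0, gl, gt, i, hi, hia⟩ := StepsAccL.path A _ _ _ hy
  have hX : 0 < x.toList.length := by simp [NStr.toList]
  have hY : 0 < y.toList.length := by simp [NStr.toList]
  refine ⟨fun n => if n < x.toList.length then f n
    else g ((n - x.toList.length) % y.toList.length), ?_, ?_, ?_⟩
  · simpa [hX, f0] using hp
  · intro n
    by_cases hn : n < x.toList.length
    · have h1 := ft n hn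
      by_cases hn' : n + 1 < x.toList.length
      · simpa [upSeq, hn, hn'] using h1
      · have e : n + 1 = x.toList.length := by omega
        have e2 : f (n + 1) = g 0 := by rw [e, fl, g0]
        rw [e2] at h1
        simpa [upSeq, hn, hn', e] using h1
    · have hn' : ¬ n + 1 < x.toList.length := by omega
      have e : n + 1 - x.toList.length = (n - x.toList.length) + 1 := by omega
      have hlt := Nat.mod_lt (n - x.toList.length) hY
      have h1 := gt _ hlt
      have key : g ((n - x.toList.length) % y.toList.length + 1) =
          g ((n - x.toList.length + 1) % y.toList.length) := by
        have h1m : (n - x.toList.length) % y.toList.length + 1 < y.toList.length ∨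
          (n - x.toList.length) % y.toList.length + 1 = y.toList.length := by omega
        rcases h1m with h2 | h2
        · congr 1
          rw [← Nat.mod_add_mod, Nat.mod_eq_of_lt h2]
        · rw [← Nat.mod_add_mod, h2, Nat.mod_self, gl, g0]
      rw [key] at h1
      simpa [upSeq, hn, hn', e] using h1
  · intro k
    refine ⟨x.toList.length + (i + y.toList.length * k), ?_, ?_⟩
    · have : k ≤ y.toList.length * k := Nat.le_mul_of_pos_left k hY
      omega
    · simpa [Nat.mod_eq_of_lt hi] using hia

theorem match_of_accepts {α : Type*} (A : BA α) (σ : ℕ → α) (h : A.Accepts σ) :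
    ∃ x y : NStr α, A.IsMatch x y := by
  obtain ⟨ρ, h0, ht, ha⟩ := h
  have := A.fin
  have key : ∃ q, ∀ k, ∃ n, k ≤ n ∧ ρ n = q ∧ A.accept q := by
    by_contra! hc
    choose b hb using hc
    obtain ⟨n, hn, hacc⟩ := ha (Finset.univ.sup b)
    exact hb (ρ n) n ((Finset.le_sup (Finset.mem_univ _)).trans hn) rfl hacc
  obtain ⟨q, hq⟩ := key
  obtain ⟨i, hi, hiq, hacc⟩ := hq 1
  obtain ⟨j, hj, hjq, -⟩ := hq (i + 1)
  obtain ⟨i', rfl⟩ : ∃ i', i = i' + 1 := ⟨i - 1, by omega⟩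
  obtain ⟨d, rfl⟩ : ∃ d, j = i' + 1 + 1 + d := ⟨j - (i' + 1 + 1), by omega⟩
  refine ⟨(σ 0, (List.range' 1 i').map σ), (σ (i' + 1), (List.range' (i' + 1 + 1) d).map σ),
    ρ 0, q, h0, ⟨ρ 1, ht 0, ?_⟩, ρ (i' + 1 + 1), ?_, Or.inl ⟨hacc, ?_⟩⟩
  · have := StepsL.of_run A σ ρ ht i' 1
    rwa [Nat.add_comm, hiq] at this
  · have := ht (i' + 1)
    rwa [hiq] at this
  · have := StepsL.of_run A σ ρ ht d (i' + 1 + 1)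
    rwa [hjq] at this

/-- A Büchi automaton is satisfiable iff it has a match; moreover every match
`(x, y)` yields an accepted ultimately periodic sequence `x·y^ω`. -/
theorem satisfiable_iff_match {α : Type*} [Fintype α] (A : BA α) :
    ((∃ σ : ℕ → α, A.Accepts σ) ↔ ∃ x y : NStr α, A.IsMatch x y) ∧
      ∀ x y : NStr α, A.IsMatch x y → A.Accepts (upSeq x y) := by
  refine ⟨⟨fun ⟨σ, h⟩ => match_of_accepts A σ h, fun ⟨x, y, h⟩ => ⟨_, accepts_of_match A x y h⟩⟩,
    fun x y h => accepts_of_match A x y h⟩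

end Buechi
end

section
/- Let V be a finite type of variables, X : V, and let A be a Büchi automaton over the alphabet Set V. Then there exists a Büchi automaton B over Set V such that for every sequence σ : ℕ → Set V, B accepts σ if and only if there exists a sequence τ : ℕ → Set V with A accepting τ and such that for every variable Z ≠ X and every n, Z ∈ σ n ↔ Z ∈ τ n. -/
namespace Buechi

/-- The automaton for existential quantification: given a variable `X` and an
automaton `A` over `Set V`, there is an automaton accepting exactly the sequences
that agree with some sequence accepted by `A` on all variables except possibly `X`. -/
theorem ex_automaton_exists {V : Type} [Fintype V] (X : V) (A : BA (Set V)) :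
    ∃ B : BA (Set V), ∀ σ : ℕ → Set V,
      B.Accepts σ ↔ ∃ τ : ℕ → Set V, A.Accepts τ ∧
        ∀ Z : V, Z ≠ X → ∀ n, (Z ∈ σ n ↔ Z ∈ τ n) := by
  refine ⟨⟨A.Q, A.fin, fun p a q => ∃ b : Set V, A.trans p b q ∧ ∀ Z : V, Z ≠ X → (Z ∈ a ↔ Z ∈ b),
    A.init, A.accept⟩, fun σ => ⟨?_, ?_⟩⟩
  · rintro ⟨ρ, h0, ht, ha⟩
    choose τ hτ using ht
    exact ⟨τ, ⟨ρ, h0, fun n => (hτ n).1, ha⟩, fun Z hZ n => (hτ n).2 Z hZ⟩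
  · rintro ⟨τ, ⟨ρ, h0, ht, ha⟩, h⟩
    exact ⟨ρ, h0, fun n => ⟨τ n, ht n, fun Z hZ => h Z hZ n⟩, ha⟩

end Buechi
end

section
/- Büchi complementation: for every Büchi automaton A over a finite alphabet Σ there exists a Büchi automaton A' over Σ such that for every sequence σ : ℕ → Σ, A' accepts σ if and only if A does not accept σ. -/
namespace Buechi

/-- Profiles: reachability, and reachability through an accepting state. -/
abbrev Prof (Q : Type) : Type := (Q → Q → Prop) × (Q → Q → Prop)

def pid (Q : Type) : Prof Q := (fun p q => p = q, fun _ _ => False)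

def pstep {α : Type*} (A : BA α) (c : Prof A.Q) (a : α) : Prof A.Q :=
  (fun p q => ∃ r, c.1 p r ∧ A.trans r a q,
   fun p q => ∃ r, A.trans r a q ∧ (c.2 p r ∨ (c.1 p r ∧ A.accept q)))

def prof {α : Type*} (A : BA α) (σ : ℕ → α) (i : ℕ) : ℕ → Prof A.Q
  | 0 => pid A.Q
  | n + 1 => pstep A (prof A σ i n) (σ (i + n))

theorem prof_of_run {α : Type*} (A : BA α) (σ : ℕ → α) (ρ : ℕ → A.Q)
    (h : ∀ n, A.trans (ρ n) (σ n) (ρ (n + 1))) (i n : ℕ) :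
    (prof A σ i n).1 (ρ i) (ρ (i + n)) ∧
    ((∃ m, i < m ∧ m ≤ i + n ∧ A.accept (ρ m)) → (prof A σ i n).2 (ρ i) (ρ (i + n))) := by
  induction n with
  | zero => exact ⟨rfl, fun ⟨m, h1, h2, _⟩ => by omega⟩
  | succ n ih =>
    refine ⟨⟨ρ (i + n), ih.1, h _⟩, ?_⟩
    rintro ⟨m, h1, h2, h3⟩
    refine ⟨ρ (i + n), h _, ?_⟩
    by_cases hm : m ≤ i + n
    · exact Or.inl (ih.2 ⟨m, h1, hm, h3⟩)
    · have : m = i + (n + 1) := by omega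
      subst this
      exact Or.inr ⟨ih.1, h3⟩

theorem extend_path {α : Type*} (A : BA α) (σ : ℕ → α) (i n : ℕ) (r : ℕ → A.Q) (q : A.Q)
    (hr : ∀ m, i ≤ m → m < i + n → A.trans (r m) (σ m) (r (m + 1)))
    (hq : A.trans (r (i + n)) (σ (i + n)) q) :
    ∃ r' : ℕ → A.Q, (∀ m, m ≤ i + n → r' m = r m) ∧ r' (i + (n + 1)) = q ∧
      ∀ m, i ≤ m → m < i + (n + 1) → A.trans (r' m) (σ m) (r' (m + 1)) := by
  refine ⟨fun m => if m ≤ i + n then r m else q, ?_, ?_, ?_⟩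
  · intro m hm; simp [hm]
  · simp
  · intro m h1 h2
    have h3 : m ≤ i + n := by omega
    by_cases h4 : m + 1 ≤ i + n
    · simpa [h3, h4] using hr m h1 (by omega)
    · have : m = i + n := by omega
      subst this
      simpa using hq

theorem path_of_prof {α : Type*} (A : BA α) (σ : ℕ → α) (i n : ℕ) (p : A.Q) :
    ∀ q, ((prof A σ i n).1 p q → ∃ r : ℕ → A.Q, r i = p ∧ r (i + n) = q ∧
      ∀ m, i ≤ m → m < i + n → A.trans (r m) (σ m) (r (m + 1))) ∧
    ((prof A σ i n).2 p q → ∃ r : ℕ → A.Q, r i = p ∧ r (i + n) = q ∧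
      (∀ m, i ≤ m → m < i + n → A.trans (r m) (σ m) (r (m + 1))) ∧
      ∃ m, i < m ∧ m ≤ i + n ∧ A.accept (r m)) := by
  induction n with
  | zero =>
    intro q
    refine ⟨fun h => ⟨fun _ => p, rfl, h, fun m _ _ => by omega⟩, fun h => h.elim⟩
  | succ n ih =>
    intro q
    constructor
    · rintro ⟨s, hs, ht⟩
      obtain ⟨r, h1, h2, h3⟩ := (ih s).1 hs
      obtain ⟨r', g1, g2, g3⟩ := extend_path A σ i n r q h3 (by rw [h2]; exact ht)
      exact ⟨r', by rw [g1 i (by omega), h1], g2, g3⟩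
    · rintro ⟨s, ht, hs | ⟨hs, ha⟩⟩
      · obtain ⟨r, h1, h2, h3, m, m1, m2, m3⟩ := (ih s).2 hs
        obtain ⟨r', g1, g2, g3⟩ := extend_path A σ i n r q h3 (by rw [h2]; exact ht)
        exact ⟨r', by rw [g1 i (by omega), h1], g2, g3, m, m1, by omega, by rwa [g1 m m2]⟩
      · obtain ⟨r, h1, h2, h3⟩ := (ih s).1 hs
        obtain ⟨r', g1, g2, g3⟩ := extend_path A σ i n r q h3 (by rw [h2]; exact ht)
        exact ⟨r', by rw [g1 i (by omega), h1], g2, g3, i + (n + 1), by omega, le_rfl,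
          by rwa [g2]⟩

theorem exists_block (c : ℕ → ℕ) (hc : StrictMono c) (h0 : c 0 = 0) (n : ℕ) :
    ∃ k, c k ≤ n ∧ n < c (k + 1) := by
  induction n with
  | zero => exact ⟨0, by omega, by have := hc (show 0 < 1 by omega); simpa using (by omega : 0 < c 1)⟩
  | succ n ih =>
    obtain ⟨k, h1, h2⟩ := ih
    by_cases h : n + 1 < c (k + 1)
    · exact ⟨k, by omega, h⟩
    · exact ⟨k + 1, by omega, by have := hc (show k + 1 < k + 1 + 1 by omega); omega⟩

theorem block_unique (c : ℕ → ℕ) (hc : StrictMono c) {n k l : ℕ}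
    (h1 : c k ≤ n) (h2 : n < c (k + 1)) (h3 : c l ≤ n) (h4 : n < c (l + 1)) : k = l := by
  have a := hc.lt_iff_lt.1 (lt_of_le_of_lt h1 h4)
  have b := hc.lt_iff_lt.1 (lt_of_le_of_lt h3 h2)
  omega

/-- Acceptance is determined by the profiles of the blocks of a factorization. -/
theorem accepts_iff_blocks {α : Type*} (A : BA α) (σ : ℕ → α) (c : ℕ → ℕ) (hc : StrictMono c)
    (h0 : c 0 = 0) :
    A.Accepts σ ↔ ∃ q : ℕ → A.Q, A.init (q 0) ∧
      (∀ k, (prof A σ (c k) (c (k + 1) - c k)).1 (q k) (q (k + 1))) ∧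
      ∀ k, ∃ n, k ≤ n ∧ (prof A σ (c n) (c (n + 1) - c n)).2 (q n) (q (n + 1)) := by
  have hlt : ∀ k, c k < c (k + 1) := fun k => hc (Nat.lt_succ_self k)
  have hadd : ∀ k, c k + (c (k + 1) - c k) = c (k + 1) := fun k => by have := hlt k; omega
  constructor
  · rintro ⟨ρ, hi, ht, ha⟩
    refine ⟨fun k => ρ (c k), by simpa [h0] using hi, fun k => ?_, fun k => ?_⟩
    · have := (prof_of_run A σ ρ ht (c k) (c (k + 1) - c k)).1
      rwa [hadd] at this
    · obtain ⟨n, hn, hacc⟩ := ha (c k + 1)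
      obtain ⟨l, l1, l2⟩ := exists_block c hc h0 (n - 1)
      refine ⟨l, ?_, ?_⟩
      · have := hc.lt_iff_lt.1 (show c k < c (l + 1) by omega)
        omega
      · have := (prof_of_run A σ ρ ht (c l) (c (l + 1) - c l)).2
        rw [hadd] at this
        exact this ⟨n, by omega, by omega, hacc⟩
  · rintro ⟨q, hi, ht, ha⟩
    have key : ∀ k, ∃ r : ℕ → A.Q, r (c k) = q k ∧ r (c (k + 1)) = q (k + 1) ∧
        (∀ m, c k ≤ m → m < c (k + 1) → A.trans (r m) (σ m) (r (m + 1))) ∧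
        ((prof A σ (c k) (c (k + 1) - c k)).2 (q k) (q (k + 1)) →
          ∃ m, c k < m ∧ m ≤ c (k + 1) ∧ A.accept (r m)) := by
      intro k
      have := path_of_prof A σ (c k) (c (k + 1) - c k) (q k) (q (k + 1))
      rw [hadd] at this
      by_cases h : (prof A σ (c k) (c (k + 1) - c k)).2 (q k) (q (k + 1))
      · obtain ⟨r, h1, h2, h3, h4⟩ := this.2 h
        exact ⟨r, h1, h2, h3, fun _ => h4⟩
      · obtain ⟨r, h1, h2, h3⟩ := this.1 (ht k)
        exact ⟨r, h1, h2, h3, fun h' => (h h').elim⟩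
    choose r r1 r2 r3 r4 using key
    choose b b1 b2 using exists_block c hc h0
    have hρ : ∀ k m, c k ≤ m → m ≤ c (k + 1) → r (b m) m = r k m := by
      intro k m h1 h2
      rcases h2.lt_or_eq with h | h
      · rw [block_unique c hc (b1 m) (b2 m) h1 h]
      · have : b m = k + 1 := block_unique c hc (b1 m) (b2 m) h.ge (h ▸ hlt (k + 1))
        rw [this, h, r1, r2]
    refine ⟨fun n => r (b n) n, ?_, fun n => ?_, fun k => ?_⟩
    · have := hρ 0 0 (by omega) (by omega)
      have h' := r1 0
      rw [h0] at h'
      simp only [this, h', hi]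
    · have := hρ (b n) (n + 1) (by have := b1 n; omega) (b2 n)
      simp only [this]
      exact r3 _ _ (b1 n) (b2 n)
    · obtain ⟨n, hn, hs⟩ := ha k
      obtain ⟨m, m1, m2, m3⟩ := r4 n hs
      refine ⟨m, ?_, ?_⟩
      · have := hc.le_apply (x := n)
        omega
      · simp only [hρ n m m1.le m2, m3]

/-- Weak additive Ramsey: consecutive blocks get the same colour. -/
theorem ramsey {C : Type} [Finite C] (f : ℕ → ℕ → C) :
    ∃ (W : C) (d : ℕ → ℕ), StrictMono d ∧ 0 < d 0 ∧ ∀ k, f (d k) (d (k + 1)) = W := by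
  have lim : ∀ g : ℕ → C, ∃ w, ∀ᶠ j in (Filter.hyperfilter ℕ : Filter ℕ), g j = w := by
    intro g
    have : ∀ᶠ j in (Filter.hyperfilter ℕ : Filter ℕ), ∃ w ∈ (Set.univ : Set C), g j = w :=
      Filter.Eventually.of_forall fun j => ⟨g j, trivial, rfl⟩
    rw [Ultrafilter.eventually_exists_mem_iff Set.finite_univ] at this
    obtain ⟨w, _, hw⟩ := this
    exact ⟨w, hw⟩
  choose F hF using fun i => lim (f i)
  obtain ⟨W, hW⟩ := lim F
  have hgt : ∀ i, ∀ᶠ j in (Filter.hyperfilter ℕ : Filter ℕ), i < j := by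
    intro i
    have : ∀ᶠ j in Filter.cofinite, i < j := by
      rw [Nat.cofinite_eq_atTop]; exact Filter.eventually_gt_atTop i
    exact Filter.hyperfilter_le_cofinite this
  have step : ∀ x : {i // F i = W}, ∃ y : {i // F i = W}, x.1 < y.1 ∧ f x.1 y.1 = W := by
    rintro ⟨i, hi⟩
    obtain ⟨j, ⟨h1, h2⟩, h3⟩ := (((hF i).and hW).and (hgt i)).exists
    exact ⟨⟨j, h2⟩, h3, h1.trans hi⟩
  choose nx n1 n2 using step
  obtain ⟨i, hi, hpos⟩ := (hW.and (hgt 0)).exists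
  let e : ℕ → {i // F i = W} := fun k => Nat.rec ⟨i, hi⟩ (fun _ x => nx x) k
  exact ⟨W, fun k => (e k).1, strictMono_nat_of_lt_succ fun k => n1 (e k), hpos,
    fun k => n2 (e k)⟩

def Bad {α : Type*} (A : BA α) (V W : Prof A.Q) : Prop :=
  ¬ ∃ q : ℕ → A.Q, A.init (q 0) ∧ (∀ k, (if k = 0 then V else W).1 (q k) (q (k + 1))) ∧
    ∀ k, ∃ n, k ≤ n ∧ (if n = 0 then V else W).2 (q n) (q (n + 1))

theorem bad_iff {α : Type*} (A : BA α) (σ : ℕ → α) (c : ℕ → ℕ) (hc : StrictMono c)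
    (h0 : c 0 = 0) (W : Prof A.Q)
    (hW : ∀ k, prof A σ (c (k + 1)) (c (k + 1 + 1) - c (k + 1)) = W) :
    Bad A (prof A σ 0 (c 1)) W ↔ ¬ A.Accepts σ := by
  rw [accepts_iff_blocks A σ c hc h0, Bad]
  have : ∀ k, (if k = 0 then prof A σ 0 (c 1) else W) = prof A σ (c k) (c (k + 1) - c k) := by
    rintro (_ | k)
    · simp [h0]
    · simp [hW k]
  simp only [this]

inductive CTrans {α : Type*} (A : BA α) :
    (Prof A.Q ⊕ (Prof A.Q × Prof A.Q × Bool)) → α →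
    (Prof A.Q ⊕ (Prof A.Q × Prof A.Q × Bool)) → Prop
  | pre (c a) : CTrans A (Sum.inl c) a (Sum.inl (pstep A c a))
  | jump (c a W) (h : Bad A (pstep A c a) W) :
      CTrans A (Sum.inl c) a (Sum.inr (W, pid A.Q, true))
  | cont (W c b a) : CTrans A (Sum.inr (W, c, b)) a (Sum.inr (W, pstep A c a, false))
  | cut (W c b a) (h : pstep A c a = W) :
      CTrans A (Sum.inr (W, c, b)) a (Sum.inr (W, pid A.Q, true))

noncomputable def compl {α : Type*} (A : BA α) : BA α where
  Q := Prof A.Q ⊕ (Prof A.Q × Prof A.Q × Bool)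
  fin := by
    haveI := A.fin
    exact Fintype.ofFinite _
  trans := CTrans A
  init := fun s => s = Sum.inl (pid A.Q)
  accept := fun s => ∃ W c, s = Sum.inr (W, c, true)

theorem compl_of_not {α : Type*} (A : BA α) (σ : ℕ → α) (h : ¬ A.Accepts σ) :
    (compl A).Accepts σ := by
  haveI := A.fin
  obtain ⟨W, d, hd, hd0, hW⟩ := ramsey (fun i j => prof A σ i (j - i))
  let c : ℕ → ℕ := fun k => Nat.casesOn (motive := fun _ => ℕ) k 0 d
  have c0 : c 0 = 0 := rfl
  have hc : StrictMono c := strictMono_nat_of_lt_succ (by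
    rintro (_ | k)
    · exact hd0
    · exact hd (Nat.lt_succ_self k))
  have hlt : ∀ k, c k < c (k + 1) := fun k => hc (Nat.lt_succ_self k)
  have hcW : ∀ k, prof A σ (c (k + 1)) (c (k + 1 + 1) - c (k + 1)) = W := hW
  have hbad := (bad_iff A σ c hc c0 W hcW).2 h
  choose b b1 b2 using exists_block c hc c0
  let S : ℕ → ℕ → (Prof A.Q ⊕ (Prof A.Q × Prof A.Q × Bool)) := fun k n =>
    if k = 0 then Sum.inl (prof A σ 0 n)
    else Sum.inr (W, prof A σ (c k) (n - c k), decide (n = c k))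
  have hb : ∀ k n, c k ≤ n → n < c (k + 1) → b n = k := fun k n h1 h2 =>
    block_unique c hc (b1 n) (b2 n) h1 h2
  refine ⟨fun n => S (b n) n, ?_, fun n => ?_, fun k => ?_⟩
  · have : b 0 = 0 := hb 0 0 (by omega) (by have := hlt 0; omega)
    simp only [this]
    rfl
  · show CTrans A (S (b n) n) (σ n) (S (b (n + 1)) (n + 1))
    have h1 := b1 n
    have h2 := b2 n
    generalize b n = k at h1 h2
    by_cases hn : n + 1 < c (k + 1)
    · rw [hb k (n + 1) (by omega) hn]
      rcases k with _ | k
      · have := CTrans.pre (A := A) (prof A σ 0 n) (σ n)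
        simpa [S, prof] using this
      · have := CTrans.cont (A := A) W (prof A σ (c (k + 1)) (n - c (k + 1)))
          (decide (n = c (k + 1))) (σ n)
        have e : n + 1 - c (k + 1) = (n - c (k + 1)) + 1 := by omega
        have e2 : c (k + 1) + (n - c (k + 1)) = n := by omega
        have e3 : ¬ (n + 1 = c (k + 1)) := by omega
        simpa [S, prof, e, e2, e3] using this
    · have hn' : n + 1 = c (k + 1) := by omega
      rw [hb (k + 1) (n + 1) (by omega) (by have := hlt (k + 1); omega)]
      have e0 : S (k + 1) (n + 1) = Sum.inr (W, pid A.Q, true) := by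
        simp [S, hn', prof]
      rw [e0]
      rcases k with _ | k
      · have e1 : pstep A (prof A σ 0 n) (σ n) = prof A σ 0 (c 1) := by
          have : c 1 = n + 1 := by simpa using hn'.symm
          rw [this]; simp [prof]
        exact CTrans.jump _ _ _ (by rw [e1]; exact hbad)
      · refine CTrans.cut _ _ _ _ ?_
        rw [← hcW k, ← hn']
        have e : n + 1 - c (k + 1) = (n - c (k + 1)) + 1 := by omega
        have e2 : c (k + 1) + (n - c (k + 1)) = n := by omega
        rw [e, prof, e2]
  · refine ⟨c (k + 1), ?_, ?_⟩
    · have := hc.le_apply (x := k + 1)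
      omega
    · have : b (c (k + 1)) = k + 1 := hb (k + 1) _ le_rfl (hlt (k + 1))
      simp only [this]
      exact ⟨W, prof A σ (c (k + 1)) (c (k + 1) - c (k + 1)), by simp [S]⟩

theorem not_of_compl {α : Type*} (A : BA α) (σ : ℕ → α) (h : (compl A).Accepts σ) :
    ¬ A.Accepts σ := by
  classical
  obtain ⟨ρ, hi, ht, ha⟩ := h
  change ∀ n, CTrans A (ρ n) (σ n) (ρ (n + 1)) at ht
  change ρ 0 = Sum.inl (pid A.Q) at hi
  let T : ℕ → Prop := fun n => ∃ W c, ρ n = Sum.inr (W, c, true)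
  have hT : ({n | T n}).Infinite := by
    rw [Set.infinite_iff_exists_gt]
    intro a
    obtain ⟨n, hn, h⟩ := ha (a + 1)
    exact ⟨n, h, by omega⟩
  have hmem : ∀ k, T (Nat.nth T k) := Nat.nth_mem_of_infinite hT
  have hmono : StrictMono (Nat.nth T) := Nat.nth_strictMono hT
  -- before the first cut
  have hpre : ∀ n, n < Nat.nth T 0 → ρ n = Sum.inl (prof A σ 0 n) := by
    intro n
    induction n with
    | zero => intro _; exact hi
    | succ n ih =>
      intro hn
      have hnT : ¬ T (n + 1) := fun h => by
        have := Nat.nth_count h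
        have h2 := hmono.monotone (Nat.zero_le (Nat.count T (n + 1)))
        omega
      have e := ih (by omega)
      have t := ht n
      rw [e] at t
      generalize hs : ρ (n + 1) = s at t
      cases t with
      | pre => simp only [prof, Nat.zero_add]; rfl
      | jump _ _ W _ => exact (hnT ⟨W, _, hs⟩).elim
  have hpos : 0 < Nat.nth T 0 := by
    rcases Nat.eq_zero_or_pos (Nat.nth T 0) with h | h
    · obtain ⟨W, c, e⟩ := hmem 0
      rw [h, hi] at e
      cases e
    · exact h
  obtain ⟨W, hbad, hW0⟩ : ∃ W, Bad A (prof A σ 0 (Nat.nth T 0)) W ∧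
      ρ (Nat.nth T 0) = Sum.inr (W, pid A.Q, true) := by
    obtain ⟨W, c, e⟩ := hmem 0
    obtain ⟨n, hn⟩ : ∃ n, Nat.nth T 0 = n + 1 := ⟨Nat.nth T 0 - 1, by omega⟩
    have t := ht n
    rw [hpre n (by omega), ← hn, e] at t
    cases t with
    | jump _ _ _ h => exact ⟨W, by rw [hn]; simpa [prof] using h, e⟩
  have hblock : ∀ k, ρ (Nat.nth T k) = Sum.inr (W, pid A.Q, true) →
      ρ (Nat.nth T (k + 1)) = Sum.inr (W, pid A.Q, true) ∧
      prof A σ (Nat.nth T k) (Nat.nth T (k + 1) - Nat.nth T k) = W := by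
    intro k hk
    have hin : ∀ m, Nat.nth T k + m < Nat.nth T (k + 1) →
        ∃ b, ρ (Nat.nth T k + m) = Sum.inr (W, prof A σ (Nat.nth T k) m, b) := by
      intro m
      induction m with
      | zero => intro _; exact ⟨true, hk⟩
      | succ m ih =>
        intro hm
        have hnT : ¬ T (Nat.nth T k + (m + 1)) := fun h => by
          have := Nat.le_nth_of_lt_nth_succ hm h
          omega
        obtain ⟨b, e⟩ := ih (by omega)
        have t := ht (Nat.nth T k + m)
        rw [e] at t
        generalize hs : ρ (Nat.nth T k + m + 1) = s at t
        cases t with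
        | cont => exact ⟨false, rfl⟩
        | cut => exact (hnT ⟨W, _, hs⟩).elim
    have hlt := hmono (Nat.lt_succ_self k)
    obtain ⟨m, hm⟩ : ∃ m, Nat.nth T (k + 1) = Nat.nth T k + m + 1 :=
      ⟨Nat.nth T (k + 1) - Nat.nth T k - 1, by simp only [Nat.succ_eq_add_one] at hlt; omega⟩
    obtain ⟨b, e⟩ := hin m (by omega)
    obtain ⟨W', c', e'⟩ := hmem (k + 1)
    have t := ht (Nat.nth T k + m)
    rw [e, ← hm, e'] at t
    have em : Nat.nth T (k + 1) - Nat.nth T k = m + 1 := by omega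
    rw [em]
    cases t with
    | cut _ _ _ _ h => exact ⟨e', h⟩
  have hall : ∀ k, ρ (Nat.nth T k) = Sum.inr (W, pid A.Q, true) := fun k => by
    induction k with
    | zero => exact hW0
    | succ k ih => exact (hblock k ih).1
  let c : ℕ → ℕ := fun k => Nat.casesOn (motive := fun _ => ℕ) k 0 (Nat.nth T)
  have hc : StrictMono c := strictMono_nat_of_lt_succ (by
    rintro (_ | k)
    · exact hpos
    · exact hmono (Nat.lt_succ_self k))
  exact (bad_iff A σ c hc rfl W (fun k => (hblock k (hall k)).2)).1 hbad

/-- Büchi complementation: every Büchi automaton has a complement automaton. -/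
theorem complement_automaton_exists {α : Type*} [Fintype α] (A : BA α) :
    ∃ A' : BA α, ∀ σ : ℕ → α, A'.Accepts σ ↔ ¬ A.Accepts σ := by
  exact ⟨compl A, fun σ => ⟨not_of_compl A σ, compl_of_not A σ⟩⟩

end Buechi
end

section
/- Let A be a Büchi automaton over a finite alphabet Σ with state type Q, and let V, W be colors in Γ_A. If A accepts some sequence of kind V/W, then A accepts every sequence of kind V/W. -/
namespace Buechi

/-- The color `γ(x)` of a nonempty string `x` in `Γ_A = Set (Q × Q) × Set (Q × Q)`:
the pair of the relations `⇒x` and `⇒x!`. -/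
def BA.gamma {α : Type*} (M : BA α) (x : NStr α) :
    Set (M.Q × M.Q) × Set (M.Q × M.Q) :=
  ({ pq | M.Steps pq.1 x pq.2 }, { pq | M.StepsAcc pq.1 x pq.2 })

/-- `σ` has kind `V/W`: it has a factorisation `τ` with `γ(τ 0) = V` and
`γ(τ n) = W` for all `n ≥ 1`. -/
def BA.HasKind {α : Type*} (M : BA α) (σ : ℕ → α)
    (V W : Set (M.Q × M.Q) × Set (M.Q × M.Q)) : Prop :=
  ∃ τ : ℕ → NStr α, IsFactorisation τ σ ∧ M.gamma (τ 0) = V ∧ ∀ n ≥ 1, M.gamma (τ n) = W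

theorem stepsL_of_run {α : Type*} (M : BA α) (σ : ℕ → α) (ρ : ℕ → M.Q)
    (hρ : ∀ n, M.trans (ρ n) (σ n) (ρ (n + 1))) (l : List α) :
    ∀ s : ℕ, (∀ (k : ℕ) (h : k < l.length), l.get ⟨k, h⟩ = σ (s + k)) →
      M.StepsL (ρ s) l (ρ (s + l.length)) ∧
      ∀ k < l.length, M.accept (ρ (s + k)) → M.StepsAccL (ρ s) l (ρ (s + l.length)) := by
  induction l with
  | nil => intro s _; simp [BA.StepsL]
  | cons a l ih =>
    intro s hs
    have h0 : a = σ s := by simpa using hs 0 (by simp)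
    have ih_b := ih (s + 1) (fun k h => by
      have := hs (k + 1) (by simpa using h)
      simp only [List.get_eq_getElem, List.getElem_cons_succ] at this ⊢
      rw [this]; congr 1; omega)
    have e : s + (a :: l).length = s + 1 + l.length := by simp; omega
    rw [e]
    refine ⟨⟨ρ (s + 1), h0 ▸ hρ s, ih_b.1⟩, ?_⟩
    intro k hk hacc
    refine ⟨ρ (s + 1), h0 ▸ hρ s, ?_⟩
    cases k with
    | zero => exact Or.inl ⟨hacc, ih_b.1⟩
    | succ k =>
      refine Or.inr (ih_b.2 k (by simpa using hk) ?_)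
      have : s + 1 + k = s + (k + 1) := by omega
      rwa [this]

theorem path_of_stepsL {α : Type*} (M : BA α) (l : List α) : ∀ p q : M.Q, M.StepsL p l q →
    ∃ r : ℕ → M.Q, r 0 = p ∧ r l.length = q ∧
      ∀ (k : ℕ) (h : k < l.length), M.trans (r k) (l.get ⟨k, h⟩) (r (k + 1)) := by
  induction l with
  | nil => intro p q h; exact ⟨fun _ => p, rfl, h, by simp⟩
  | cons a l ih =>
    rintro p q ⟨t, ht, h⟩
    obtain ⟨r, h0, h1, h2⟩ := ih t q h
    refine ⟨fun n => Nat.casesOn n p r, rfl, h1, ?_⟩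
    intro k hk
    cases k with
    | zero => simpa [h0] using ht
    | succ k => exact h2 k (by simpa using hk)

theorem path_of_stepsAccL {α : Type*} (M : BA α) (l : List α) : ∀ p q : M.Q, M.StepsAccL p l q →
    ∃ r : ℕ → M.Q, r 0 = p ∧ r l.length = q ∧
      (∀ (k : ℕ) (h : k < l.length), M.trans (r k) (l.get ⟨k, h⟩) (r (k + 1))) ∧
      ∃ k < l.length, M.accept (r k) := by
  induction l with
  | nil => intro p q h; exact h.elim
  | cons a l ih =>
    rintro p q ⟨t, ht, ⟨hp, h⟩ | h⟩
    · obtain ⟨r, h0, h1, h2⟩ := path_of_stepsL M l t q h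
      refine ⟨fun n => Nat.casesOn n p r, rfl, h1, ?_, 0, by simp, hp⟩
      intro k hk
      cases k with
      | zero => simpa [h0] using ht
      | succ k => exact h2 k (by simpa using hk)
    · obtain ⟨r, h0, h1, h2, j, hj, hacc⟩ := ih t q h
      refine ⟨fun n => Nat.casesOn n p r, rfl, h1, ?_, j + 1, by simpa using hj, hacc⟩
      intro k hk
      cases k with
      | zero => simpa [h0] using ht
      | succ k => exact h2 k (by simpa using hk)

theorem len_pos {α : Type*} (x : NStr α) : 0 < x.toList.length := by simp [NStr.toList]

theorem facStart_strictMono {α : Type*} (τ : ℕ → NStr α) : StrictMono (facStart τ) :=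
  strictMono_nat_of_lt_succ fun n => by
    have := len_pos (τ n)
    simp only [facStart]; omega

theorem exists_block_s15 {α : Type*} (τ : ℕ → NStr α) (m : ℕ) :
    ∃ n k, k < (τ n).toList.length ∧ m = facStart τ n + k := by
  induction m with
  | zero => exact ⟨0, 0, len_pos _, rfl⟩
  | succ m ih =>
    obtain ⟨n, k, hk, rfl⟩ := ih
    by_cases h : k + 1 < (τ n).toList.length
    · exact ⟨n, k + 1, h, rfl⟩
    · exact ⟨n + 1, 0, len_pos _, by simp only [facStart]; omega⟩

theorem block_unique_s15 {α : Type*} (τ : ℕ → NStr α) (n k n_b k_b : ℕ)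
    (hk : k < (τ n).toList.length) (hk_b : k_b < (τ n_b).toList.length)
    (e : facStart τ n + k = facStart τ n_b + k_b) : n = n_b ∧ k = k_b := by
  have mono := (facStart_strictMono τ).monotone
  rcases lt_trichotomy n n_b with h | h | h
  · have := mono (Nat.succ_le_of_lt h)
    simp only [facStart] at this; omega
  · subst h; exact ⟨rfl, by omega⟩
  · have := mono (Nat.succ_le_of_lt h)
    simp only [facStart] at this; omega

theorem accepts_of_blocks {α : Type*} (M : BA α) (σ : ℕ → α) (τ : ℕ → NStr α)
    (hτ : IsFactorisation τ σ) (s : ℕ → M.Q) (h0 : M.init (s 0))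
    (hs : ∀ n, M.Steps (s n) (τ n) (s (n + 1)))
    (ha : ∀ N, ∃ n, N ≤ n ∧ M.StepsAcc (s n) (τ n) (s (n + 1))) : M.Accepts σ := by
  have key : ∀ n, ∃ r : ℕ → M.Q, r 0 = s n ∧ r (τ n).toList.length = s (n + 1) ∧
      (∀ (k : ℕ) (h : k < (τ n).toList.length),
        M.trans (r k) ((τ n).toList.get ⟨k, h⟩) (r (k + 1))) ∧
      (M.StepsAcc (s n) (τ n) (s (n + 1)) → ∃ k < (τ n).toList.length, M.accept (r k)) := by
    intro n
    by_cases h : M.StepsAcc (s n) (τ n) (s (n + 1))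
    · obtain ⟨r, a, b, c, d⟩ := path_of_stepsAccL M _ _ _ h
      exact ⟨r, a, b, c, fun _ => d⟩
    · obtain ⟨r, a, b, c⟩ := path_of_stepsL M _ _ _ (hs n)
      exact ⟨r, a, b, c, fun h_b => (h h_b).elim⟩
  choose r r0 r1 r2 r3 using key
  choose N K hK hNK using exists_block_s15 τ
  have hρ : ∀ n k, k < (τ n).toList.length →
      r (N (facStart τ n + k)) (K (facStart τ n + k)) = r n k := by
    intro n k hk
    obtain ⟨e1, e2⟩ := block_unique_s15 τ _ _ _ _ hk (hK _) (hNK (facStart τ n + k))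
    rw [← e1, ← e2]
  have hρ_b : ∀ n k, k ≤ (τ n).toList.length →
      r (N (facStart τ n + k)) (K (facStart τ n + k)) = r n k := by
    intro n k hk
    rcases hk.lt_or_eq with h | h
    · exact hρ n k h
    · have := hρ (n + 1) 0 (len_pos _)
      rw [h, r1, ← r0 (n + 1)]
      exact this
  refine ⟨fun m => r (N m) (K m), ?_, ?_, ?_⟩
  · have := hρ 0 0 (len_pos _)
    simp only [facStart] at this
    show M.init (r (N 0) (K 0))
    rw [show r (N 0) (K 0) = r 0 0 from this, r0]; exact h0
  · intro m
    obtain ⟨n, k, hk, rfl⟩ := exists_block_s15 τ m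
    show M.trans (r (N (facStart τ n + k)) (K (facStart τ n + k))) _
      (r (N (facStart τ n + (k + 1))) (K (facStart τ n + (k + 1))))
    rw [hρ n k hk, hρ_b n (k + 1) hk, ← hτ n k hk]
    exact r2 n k hk
  · intro m
    obtain ⟨n, hn, hacc⟩ := ha m
    obtain ⟨k, hk, hk_b⟩ := r3 n hacc
    refine ⟨facStart τ n + k, ?_, ?_⟩
    · have := (facStart_strictMono τ).le_apply (x := n)
      omega
    · show M.accept (r (N (facStart τ n + k)) (K (facStart τ n + k)))
      rw [hρ n k hk]; exact hk_b

/-- If a Büchi automaton accepts some sequence of kind `V/W`, then it accepts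
every sequence of kind `V/W`. -/
theorem kind_compatibility {α : Type*} [Fintype α] (A : BA α)
    (V W : Set (A.Q × A.Q) × Set (A.Q × A.Q))
    (h : ∃ σ : ℕ → α, A.HasKind σ V W ∧ A.Accepts σ) :
    ∀ σ : ℕ → α, A.HasKind σ V W → A.Accepts σ := by
  rintro σ_b ⟨τ_b, hτ_b, hV_b, hW_b⟩
  obtain ⟨σ, ⟨τ, hτ, hV, hW⟩, ρ, hi, ht, hacc⟩ := h
  have hγ : ∀ n, A.gamma (τ n) = A.gamma (τ_b n) := by
    intro n
    rcases Nat.eq_zero_or_pos n with h | h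
    · subst h; rw [hV, hV_b]
    · rw [hW n h, hW_b n h]
  have h1 : ∀ n p q, A.Steps p (τ n) q → A.Steps p (τ_b n) q := fun n p q h => by
    have := congrArg Prod.fst (hγ n)
    exact (Set.ext_iff.1 this (p, q)).1 h
  have h2 : ∀ n p q, A.StepsAcc p (τ n) q → A.StepsAcc p (τ_b n) q := fun n p q h => by
    have := congrArg Prod.snd (hγ n)
    exact (Set.ext_iff.1 this (p, q)).1 h
  refine accepts_of_blocks A σ_b τ_b hτ_b (fun n => ρ (facStart τ n)) hi ?_ ?_
  · intro n
    exact h1 _ _ _ (stepsL_of_run A σ ρ ht _ (facStart τ n) (hτ n)).1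
  · intro N
    obtain ⟨m, hm, hma⟩ := hacc (facStart τ N)
    obtain ⟨n, k, hk, rfl⟩ := exists_block_s15 τ m
    refine ⟨n, ?_, h2 _ _ _ ((stepsL_of_run A σ ρ ht _ (facStart τ n) (hτ n)).2 k hk hma)⟩
    by_contra hlt
    have := (facStart_strictMono τ).monotone (show n + 1 ≤ N by omega)
    simp only [facStart] at this
    omega

end Buechi
end

section
/- Let A and B be Büchi automata over a finite alphabet Σ. If A and B accept exactly the same ultimately periodic sequences (i.e., for all nonempty strings x, y over Σ, A accepts x·y^ω if and only if B accepts x·y^ω), then A and B accept exactly the same sequences. -/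
namespace Buechi

theorem exists_cut {C : Type*} [Finite C] (col : ℕ → ℕ → C) :
    ∃ i : ℕ → ℕ, StrictMono i ∧ 0 < i 0 ∧
      ∀ k, col (i k) (i (k + 1)) = col (i 0) (i 1) := by
  classical
  let U : Ultrafilter ℕ := Filter.hyperfilter ℕ
  have key : ∀ f : ℕ → C, ∃ c, ∀ᶠ n in (U : Filter ℕ), f n = c := by
    intro f
    obtain ⟨c, hc⟩ := Ultrafilter.eq_pure_of_finite (U.map f)
    refine ⟨c, ?_⟩
    have : {c} ∈ U.map f := by rw [hc]; simp
    exact this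
  have big : ∀ m, ∀ᶠ n in (U : Filter ℕ), m < n := by
    intro m
    have h1 : (U : Filter ℕ) ≤ Filter.atTop := by
      rw [← Nat.cofinite_eq_atTop]; exact Filter.hyperfilter_le_cofinite
    exact h1 (Filter.eventually_gt_atTop m)
  choose c hc using fun i => key (col i)
  obtain ⟨d, hd⟩ := key c
  obtain ⟨s, hs0, hs⟩ := ((big 0).and hd).exists
  have step : ∀ a : {n // c n = d}, ∃ b : {n // c n = d}, a.1 < b.1 ∧ col a.1 b.1 = d := by
    rintro ⟨a, ha⟩
    obtain ⟨b, hb1, hb2, hb3⟩ := ((big a).and (hd.and (hc a))).exists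
    exact ⟨⟨b, hb2⟩, hb1, hb3.trans ha⟩
  choose g hg1 hg2 using step
  let e : ℕ → {n // c n = d} := fun k => g^[k] ⟨s, hs⟩
  have he : ∀ k, e (k + 1) = g (e k) := fun k => Function.iterate_succ_apply' g k _
  have hcol : ∀ k, col (e k).1 (e (k + 1)).1 = d := fun k => by rw [he]; exact hg2 _
  refine ⟨fun k => (e k).1, strictMono_nat_of_lt_succ fun k => ?_, hs0, fun k => ?_⟩
  · rw [he]; exact hg1 _
  · exact (hcol k).trans (hcol 0).symm

/-- Existence of a path of length `L` on `w`, through an accepting state if `b`. -/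
def Seg {α : Type*} (M : BA α) (w : ℕ → α) (L : ℕ) (p q : M.Q) (b : Bool) : Prop :=
  ∃ r : ℕ → M.Q, r 0 = p ∧ r L = q ∧ (∀ n < L, M.trans (r n) (w n) (r (n + 1))) ∧
    (b = true → ∃ n < L, M.accept (r n))

theorem Seg_congr {α : Type*} (M : BA α) {w w' : ℕ → α} {L : ℕ} (h : ∀ n < L, w n = w' n) :
    Seg M w L = Seg M w' L := by
  funext p q b
  apply propext
  constructor
  · rintro ⟨r, h1, h2, h3, h4⟩
    exact ⟨r, h1, h2, fun n hn => h n hn ▸ h3 n hn, h4⟩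
  · rintro ⟨r, h1, h2, h3, h4⟩
    exact ⟨r, h1, h2, fun n hn => (h n hn).symm ▸ h3 n hn, h4⟩

theorem exists_index {j : ℕ → ℕ} (hj : StrictMono j) (h0 : j 0 = 0) (n : ℕ) :
    ∃ k, j k ≤ n ∧ n < j (k + 1) := by
  induction n with
  | zero => exact ⟨0, h0.le, by have := hj Nat.zero_lt_one; simp only [Nat.zero_add]; omega⟩
  | succ n ih =>
    obtain ⟨k, h1, h2⟩ := ih
    by_cases h : n + 1 < j (k + 1)
    · exact ⟨k, by omega, h⟩
    · have := hj (Nat.lt_succ_self (k + 1))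
      exact ⟨k + 1, by omega, by simp only [Nat.succ_eq_add_one] at this; omega⟩

theorem transfer {α : Type*} (M : BA α) (σ τ : ℕ → α) (i j : ℕ → ℕ) (hi : StrictMono i)
    (hj : StrictMono j) (i0 : i 0 = 0) (j0 : j 0 = 0)
    (H : ∀ k, Seg M (fun n => σ (i k + n)) (i (k + 1) - i k) =
      Seg M (fun n => τ (j k + n)) (j (k + 1) - j k)) (hA : M.Accepts σ) : M.Accepts τ := by
  classical
  obtain ⟨ρ, h0, h1, h2⟩ := hA
  have hseg : ∀ k, Seg M (fun n => τ (j k + n)) (j (k + 1) - j k) (ρ (i k)) (ρ (i (k + 1)))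
      (decide (∃ n, i k ≤ n ∧ n < i (k + 1) ∧ M.accept (ρ n))) := by
    intro k
    rw [← H k]
    have hik := hi (Nat.lt_add_one k)
    refine ⟨fun n => ρ (i k + n), rfl, ?_, fun n _ => h1 _, ?_⟩
    · show ρ (i k + (i (k + 1) - i k)) = _
      congr 1; omega
    · intro h
      obtain ⟨n, hn1, hn2, hn3⟩ := of_decide_eq_true h
      refine ⟨n - i k, by omega, ?_⟩
      show M.accept (ρ (i k + (n - i k)))
      rwa [Nat.add_sub_cancel' hn1]
  choose r r1 r2 r3 r4 using hseg
  choose K K1 K2 using exists_index hj j0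
  let R : ℕ → M.Q := fun n => r (K n) (n - j (K n))
  have Kuniq : ∀ n k, j k ≤ n → n < j (k + 1) → K n = k := by
    intro n k a b
    have c1 : K n < k + 1 := hj.lt_iff_lt.1 ((K1 n).trans_lt b)
    have c2 : k < K n + 1 := hj.lt_iff_lt.1 (a.trans_lt (K2 n))
    omega
  have Rlt : ∀ k m, m < j (k + 1) - j k → R (j k + m) = r k m := by
    intro k m hm
    have : K (j k + m) = k := Kuniq _ _ (by omega) (by omega)
    show r (K (j k + m)) (j k + m - j (K (j k + m))) = _
    rw [this, Nat.add_sub_cancel_left]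
  have R0 : ∀ k, R (j k) = ρ (i k) := by
    intro k
    have := Rlt k 0 (by have := hj (Nat.lt_add_one k); omega)
    rw [← r1 k, ← this, Nat.add_zero]
  have Rle : ∀ k m, m ≤ j (k + 1) - j k → R (j k + m) = r k m := by
    intro k m hm
    rcases hm.lt_or_eq with h | h
    · exact Rlt k m h
    · have hk := hj (Nat.lt_add_one k)
      rw [h, r2, Nat.add_sub_cancel' hk.le, R0]
  refine ⟨R, ?_, ?_, ?_⟩
  · have := R0 0
    rw [j0, i0] at this
    rwa [this]
  · intro n
    have a := K1 n
    have b := K2 n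
    have e := r3 (K n) (n - j (K n)) (by omega)
    rw [← Rle _ _ (by omega), ← Rle _ _ (by omega)] at e
    have e1 : j (K n) + (n - j (K n)) = n := by omega
    have e2 : j (K n) + (n - j (K n) + 1) = n + 1 := by omega
    simpa only [e1, e2] using e
  · intro k
    obtain ⟨n, hn, hacc⟩ := h2 (i k)
    obtain ⟨l, hl1, hl2⟩ := exists_index hi i0 n
    obtain ⟨m, hm, hm'⟩ := r4 l (decide_eq_true ⟨n, hl1, hl2, hacc⟩)
    refine ⟨j l + m, ?_, by rwa [Rlt l m hm]⟩
    have c : k < l + 1 := hi.lt_iff_lt.1 (hn.trans_lt hl2)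
    have : l ≤ j l := hj.le_apply
    omega

/-- The nonempty string formed by the first `L` symbols of `w` (for positive `L`). -/
def mkStr {α : Type*} (w : ℕ → α) (L : ℕ) : NStr α :=
  (w 0, (List.range (L - 1)).map fun n => w (n + 1))

theorem mkStr_toList {α : Type*} (w : ℕ → α) (L : ℕ) (hL : 0 < L) :
    (mkStr w L).toList = (List.range L).map w := by
  obtain ⟨l, rfl⟩ : ∃ l, L = l + 1 := ⟨L - 1, by omega⟩
  simp [mkStr, NStr.toList, List.range_succ_eq_map, Function.comp_def]

theorem upSeq_mk {α : Type*} (w w' : ℕ → α) (L L' : ℕ) (hL : 0 < L) (hL' : 0 < L') (n : ℕ) :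
    upSeq (mkStr w L) (mkStr w' L') n = if n < L then w n else w' ((n - L) % L') := by
  unfold upSeq
  simp [mkStr_toList _ _ hL, mkStr_toList _ _ hL']

theorem accepts_iff {α : Type*} (M : BA α) (σ : ℕ → α) (i : ℕ → ℕ) (hi : StrictMono i)
    (i0 : 0 < i 0)
    (H : ∀ k, Seg M (fun n => σ (i k + n)) (i (k + 1) - i k) =
      Seg M (fun n => σ (i 0 + n)) (i 1 - i 0)) :
    M.Accepts σ ↔
      M.Accepts (upSeq (mkStr σ (i 0)) (mkStr (fun n => σ (i 0 + n)) (i 1 - i 0))) := by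
  have h01 : 0 < i 1 - i 0 := by have := hi Nat.zero_lt_one; omega
  set L := i 1 - i 0 with hL
  set τ := upSeq (mkStr σ (i 0)) (mkStr (fun n => σ (i 0 + n)) L) with hτ
  have ht : ∀ n, τ n = if n < i 0 then σ n else σ (i 0 + (n - i 0) % L) :=
    fun n => upSeq_mk _ _ _ _ i0 h01 n
  let a : ℕ → ℕ := fun k => Nat.casesOn k 0 i
  let b : ℕ → ℕ := fun k => Nat.casesOn k 0 (fun k => i 0 + k * L)
  have ha : StrictMono a := by
    apply strictMono_nat_of_lt_succ
    rintro (_ | k)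
    · exact i0
    · exact hi (Nat.lt_add_one k)
  have hb : StrictMono b := by
    apply strictMono_nat_of_lt_succ
    rintro (_ | k)
    · show 0 < i 0 + 0 * L
      omega
    · show i 0 + k * L < i 0 + (k + 1) * L
      rw [Nat.succ_mul]; omega
  have E : ∀ k, Seg M (fun n => σ (a k + n)) (a (k + 1) - a k) =
      Seg M (fun n => τ (b k + n)) (b (k + 1) - b k) := by
    rintro (_ | k)
    · show Seg M (fun n => σ (0 + n)) (i 0 - 0) = Seg M (fun n => τ (0 + n)) (i 0 + 0 * L - 0)
      simp only [Nat.zero_mul, Nat.add_zero, Nat.sub_zero, Nat.zero_add]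
      exact Seg_congr M fun n hn => by rw [ht, if_pos hn]
    · show Seg M (fun n => σ (i k + n)) (i (k + 1) - i k) =
        Seg M (fun n => τ (i 0 + k * L + n)) (i 0 + (k + 1) * L - (i 0 + k * L))
      have e : i 0 + (k + 1) * L - (i 0 + k * L) = L := by rw [Nat.succ_mul]; omega
      rw [H, e]
      refine Seg_congr M fun n hn => ?_
      have e2 : i 0 + k * L + n - i 0 = n + k * L := by omega
      rw [ht, if_neg (by omega), e2, Nat.add_mul_mod_self_right, Nat.mod_eq_of_lt hn]
  exact ⟨transfer M σ τ a b ha hb rfl rfl E,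
    transfer M τ σ b a hb ha rfl rfl fun k => (E k).symm⟩

/-- If two Büchi automata accept the same ultimately periodic sequences, then
they accept the same sequences. -/
theorem up_equiv_implies_equiv {α : Type*} [Fintype α] (A B : BA α)
    (h : ∀ x y : NStr α, A.Accepts (upSeq x y) ↔ B.Accepts (upSeq x y)) :
    ∀ σ : ℕ → α, A.Accepts σ ↔ B.Accepts σ := by
  intro σ
  have := A.fin
  have := B.fin
  obtain ⟨i, hi, i0, H⟩ := exists_cut (fun a b =>
    (Seg A (fun n => σ (a + n)) (b - a), Seg B (fun n => σ (a + n)) (b - a)))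
  rw [accepts_iff A σ i hi i0 fun k => congrArg Prod.fst (H k),
    accepts_iff B σ i hi i0 fun k => congrArg Prod.snd (H k)]
  exact h _ _

end Buechi
end

section
/- A formula φ of minimal S1S is satisfiable under AS semantics if and only if it is satisfiable under UP semantics; that is, there exists an interpretation σ : ℕ → Set V with σ ⊨ φ if and only if there exist nonempty finite strings x, y over Set V with x·y^ω ⊨_UP φ. -/
namespace Buechi

/-- Formulas of minimal S1S over the variable type `V`. -/
inductive MinForm (V : Type) : Type
  | less : V → V → MinForm V
  | incl : V → V → MinForm V
  | conj : MinForm V → MinForm V → MinForm V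
  | neg : MinForm V → MinForm V
  | ex : V → MinForm V → MinForm V

/-- AS satisfaction `σ ⊨ φ`, where interpretations are arbitrary sequences
`σ : ℕ → Set V`. -/
def Sat {V : Type} (σ : ℕ → Set V) : MinForm V → Prop
  | .less X Y => ∃ m n, m < n ∧ X ∈ σ m ∧ Y ∈ σ n
  | .incl X Y => ∀ n, X ∈ σ n → Y ∈ σ n
  | .conj φ ψ => Sat σ φ ∧ Sat σ ψ
  | .neg φ => ¬ Sat σ φ
  | .ex X φ => ∃ τ : ℕ → Set V, Sat τ φ ∧ ∀ Z, Z ≠ X → ∀ n, (Z ∈ σ n ↔ Z ∈ τ n)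

/-- UP satisfaction `x·y^ω ⊨_UP φ`, where all interpretations, including the
existential witness in the clause for `∃X.φ`, range only over ultimately periodic
sequences given by pairs of nonempty strings over `Set V`. -/
def SatUP {V : Type} : MinForm V → NStr (Set V) → NStr (Set V) → Prop
  | .less X Y, x, y => ∃ m n, m < n ∧ X ∈ upSeq x y m ∧ Y ∈ upSeq x y n
  | .incl X Y, x, y => ∀ n, X ∈ upSeq x y n → Y ∈ upSeq x y n
  | .conj φ ψ, x, y => SatUP φ x y ∧ SatUP ψ x y
  | .neg φ, x, y => ¬ SatUP φ x y
  | .ex X φ, x, y =>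
      ∃ u v : NStr (Set V), SatUP φ u v ∧ ∀ Z, Z ≠ X → ∀ n, (Z ∈ upSeq x y n ↔ Z ∈ upSeq u v n)

/-- Recognition of a set of sequences by a finite colouring of finite words. -/
def Recog {A : Type} (L : (ℕ → A) → Prop) : Prop :=
  ∃ (C : Type) (_ : Finite C) (h : ℕ → (ℕ → A) → C),
    (∀ n w w', (∀ i < n, w i = w' i) → h n w = h n w') ∧
    ∀ (s s' : ℕ → A) (f f' : ℕ → ℕ), StrictMono f → StrictMono f' → f 0 = 0 → f' 0 = 0 →
      (∀ i, h (f (i+1) - f i) (fun t => s (f i + t)) =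
        h (f' (i+1) - f' i) (fun t => s' (f' i + t))) → L s → L s'

theorem block {f : ℕ → ℕ} (hf : StrictMono f) (h0 : f 0 = 0) (n : ℕ) :
    ∃ i, f i ≤ n ∧ n < f (i+1) := by
  have hex : ∃ i, n < f (i+1) := ⟨n, lt_of_lt_of_le (Nat.lt_succ_self n) (hf.id_le (n+1))⟩
  classical
  refine ⟨Nat.find hex, ?_, Nat.find_spec hex⟩
  rcases hk : Nat.find hex with _ | k
  · omega
  · have := Nat.find_min hex (m := k) (by omega)
    omega

theorem block_le {f : ℕ → ℕ} (hf : StrictMono f) {i j m n : ℕ} (h1 : f i ≤ m) (h2 : n < f (j+1))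
    (h : m ≤ n) : i ≤ j := by
  have : f i < f (j+1) := by omega
  have := hf.lt_iff_lt.1 this
  omega

theorem glue {A : Type} {f : ℕ → ℕ} (hf : StrictMono f) (h0 : f 0 = 0) (w : ℕ → ℕ → A) :
    ∃ s : ℕ → A, ∀ i t, t < f (i+1) - f i → s (f i + t) = w i t := by
  choose b hb1 hb2 using block hf h0
  refine ⟨fun n => w (b n) (n - f (b n)), fun i t ht => ?_⟩
  have hb : b (f i + t) = i := by
    apply le_antisymm
    · exact block_le hf (hb1 _) (n := f i + t) (by omega) le_rfl
    · exact block_le hf (m := f i + t) (by omega) (hb2 _) le_rfl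
  simp [hb]

theorem recog_sat {V : Type} (φ : MinForm V) : Recog (fun s : ℕ → Set V => Sat s φ) := by
  induction φ with
  | less X Y =>
    refine ⟨Prop × Prop × Prop, inferInstance, fun n w =>
      (∃ i < n, X ∈ w i, ∃ i < n, Y ∈ w i, ∃ i < n, ∃ j < n, i < j ∧ X ∈ w i ∧ Y ∈ w j), ?_, ?_⟩
    · intro n w w' h
      simp only [Prod.mk.injEq, eq_iff_iff]
      refine ⟨?_, ?_, ?_⟩
      · exact exists_congr fun i => and_congr_right fun hi => by rw [h i hi]
      · exact exists_congr fun i => and_congr_right fun hi => by rw [h i hi]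
      · exact exists_congr fun i => and_congr_right fun hi => exists_congr fun j =>
          and_congr_right fun hj => by rw [h i hi, h j hj]
    · intro s s' f f' hf hf' h0 h0' hh hs
      simp only [Prod.mk.injEq, eq_iff_iff] at hh
      obtain ⟨m, n, hmn, hm, hn⟩ := hs
      obtain ⟨i, hi1, hi2⟩ := block hf h0 m
      obtain ⟨j, hj1, hj2⟩ := block hf h0 n
      have hij := block_le hf hi1 hj2 hmn.le
      rcases hij.eq_or_lt with rfl | hij
      · obtain ⟨a, _, b, _, hab, ha, hb⟩ := (hh i).2.2.1 ⟨m - f i, by omega, n - f i, by omega,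
          by omega, by rwa [Nat.add_sub_cancel' hi1], by rwa [Nat.add_sub_cancel' hj1]⟩
        exact ⟨_, _, by omega, ha, hb⟩
      · obtain ⟨a, ha', ha⟩ := (hh i).1.1 ⟨m - f i, by omega, by rwa [Nat.add_sub_cancel' hi1]⟩
        obtain ⟨b, hb', hb⟩ := (hh j).2.1.1 ⟨n - f j, by omega, by rwa [Nat.add_sub_cancel' hj1]⟩
        have : f' (i+1) ≤ f' j := hf'.monotone hij
        exact ⟨_, _, by omega, ha, hb⟩
  | incl X Y =>
    refine ⟨Prop, inferInstance, fun n w => ∀ i < n, X ∈ w i → Y ∈ w i, ?_, ?_⟩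
    · intro n w w' h
      simp only [eq_iff_iff]
      exact forall_congr' fun i => forall_congr' fun hi => by rw [h i hi]
    · intro s s' f f' hf hf' h0 h0' hh hs n hn
      obtain ⟨i, hi1, hi2⟩ := block hf' h0' n
      simp only [eq_iff_iff] at hh
      have := (hh i).1 (fun t _ => hs _) (n - f' i) (by omega)
      rw [Nat.add_sub_cancel' hi1] at this
      exact this hn
  | conj φ ψ ih1 ih2 =>
    obtain ⟨C, _, h, hl, hr⟩ := ih1
    obtain ⟨C', _, h', hl', hr'⟩ := ih2
    refine ⟨C × C', inferInstance, fun n w => (h n w, h' n w), ?_, ?_⟩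
    · intro n w w' e
      exact Prod.ext (hl n w w' e) (hl' n w w' e)
    · intro s s' f f' hf hf' h0 h0' hh hs
      simp only [Prod.mk.injEq] at hh
      exact ⟨hr s s' f f' hf hf' h0 h0' (fun i => (hh i).1) hs.1,
        hr' s s' f f' hf hf' h0 h0' (fun i => (hh i).2) hs.2⟩
  | neg φ ih =>
    obtain ⟨C, hC, h, hl, hr⟩ := ih
    refine ⟨C, hC, h, hl, ?_⟩
    intro s s' f f' hf hf' h0 h0' hh hs hs'
    exact hs (hr s' s f' f hf' hf h0' h0 (fun i => (hh i).symm) hs')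
  | ex X φ ih =>
    obtain ⟨C, hC, h, hl, hr⟩ := ih
    refine ⟨Set C, inferInstance, fun n w => {c | ∃ w' : ℕ → Set V,
      (∀ i < n, ∀ Z, Z ≠ X → (Z ∈ w i ↔ Z ∈ w' i)) ∧ h n w' = c}, ?_, ?_⟩
    · intro n w w' e
      ext c
      exact exists_congr fun u => and_congr_left fun _ => forall_congr' fun i =>
        forall_congr' fun hi => by rw [e i hi]
    · intro s s' f f' hf hf' h0 h0' hh hs
      obtain ⟨τ, hτ, hZ⟩ := hs
      have key : ∀ i, ∃ w' : ℕ → Set V,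
          (∀ t < f' (i+1) - f' i, ∀ Z, Z ≠ X → (Z ∈ s' (f' i + t) ↔ Z ∈ w' t)) ∧
          h (f' (i+1) - f' i) w' = h (f (i+1) - f i) (fun t => τ (f i + t)) := by
        intro i
        have := (Set.ext_iff.1 (hh i) (h (f (i+1) - f i) (fun t => τ (f i + t)))).1
          ⟨fun t => τ (f i + t), fun t _ Z hz => hZ Z hz _, rfl⟩
        exact this
      choose w hw1 hw2 using key
      obtain ⟨τ', hτ'⟩ := glue hf' h0' w
      refine ⟨τ', hr τ τ' f f' hf hf' h0 h0' (fun i => ?_) hτ, ?_⟩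
      · rw [← hw2 i]
        exact hl _ _ _ fun t ht => (hτ' i t ht).symm
      · intro Z hz n
        obtain ⟨i, hi1, hi2⟩ := block hf' h0' n
        have h1 := hw1 i (n - f' i) (by omega) Z hz
        have h2 := hτ' i (n - f' i) (by omega)
        rw [Nat.add_sub_cancel' hi1] at h1 h2
        rw [h1, h2]

/-- A monochromatic infinite path in a finitely coloured complete graph on `ℕ`. -/
theorem mono_path {C : Type} [Finite C] (χ : ℕ → ℕ → C) :
    ∃ (g : ℕ → ℕ) (c : C), StrictMono g ∧ ∀ i, χ (g i) (g (i+1)) = c := by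
  let U := Filter.hyperfilter ℕ
  have pig : ∀ k : ℕ → C, ∃ c, ∀ᶠ j in (U : Filter ℕ), k j = c := by
    intro k
    have := (Ultrafilter.eventually_exists_iff (f := U) (P := fun c j => k j = c)).1
      (Filter.Eventually.of_forall fun j => ⟨k j, rfl⟩)
    exact this
  choose c hc using fun i => pig (χ i)
  obtain ⟨d, hd⟩ := pig c
  have gt : ∀ i, ∀ᶠ j in (U : Filter ℕ), i < j := by
    intro i
    have h1 : (U : Filter ℕ) ≤ Filter.atTop := Nat.hyperfilter_le_atTop
    exact h1 (Filter.eventually_gt_atTop i)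
  have step : ∀ i : {i // c i = d}, ∃ j : {i // c i = d}, i.1 < j.1 ∧ χ i.1 j.1 = d := by
    rintro ⟨i, hi⟩
    obtain ⟨j, ⟨h1, h2⟩, h3⟩ := ((hd.and (hc i)).and (gt i)).exists
    exact ⟨⟨j, h1⟩, h3, h2.trans hi⟩
  obtain ⟨i0, hi0⟩ := hd.exists
  choose nx h1 h2 using step
  let G : ℕ → {i // c i = d} := fun n => Nat.rec ⟨i0, hi0⟩ (fun _ x => nx x) n
  exact ⟨fun n => (G n).1, d, strictMono_nat_of_lt_succ fun n => h1 (G n), fun n => h2 (G n)⟩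

def IsUP {A : Type} (s : ℕ → A) : Prop := ∃ N p, 0 < N ∧ 0 < p ∧ ∀ n, N ≤ n → s (n + p) = s n

theorem per {A : Type} {s : ℕ → A} {N p : ℕ} (h : ∀ n, N ≤ n → s (n + p) = s n) (k : ℕ) :
    ∀ n, N ≤ n → s (n + k * p) = s n := by
  induction k with
  | zero => simp
  | succ k ih =>
    intro n hn
    rw [Nat.succ_mul, ← add_assoc, h _ (by omega), ih n hn]

theorem isUP_upSeq {A : Type} (x y : NStr A) : IsUP (upSeq x y) := by
  refine ⟨x.toList.length, y.toList.length, by simp [NStr.toList], by simp [NStr.toList], ?_⟩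
  intro n hn
  unfold upSeq
  rw [dif_neg (by omega), dif_neg (by omega)]
  congr 2
  rw [Nat.sub_add_comm hn, Nat.add_mod_right]

theorem IsUP.exists_upSeq {A : Type} {s : ℕ → A} (h : IsUP s) : ∃ x y : NStr A, upSeq x y = s := by
  obtain ⟨N, p, hN, hp, h⟩ := h
  have mk : ∀ a n, 0 < n → ∃ x : NStr A, x.toList = (List.range n).map fun t => s (a + t) := by
    intro a n hn
    obtain ⟨n, rfl⟩ := Nat.exists_eq_succ_of_ne_zero hn.ne'
    refine ⟨(s a, (List.range n).map fun t => s (a + (t+1))), ?_⟩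
    simp [NStr.toList, List.range_succ_eq_map]
  obtain ⟨x, hx⟩ := mk 0 N hN
  obtain ⟨y, hy⟩ := mk N p hp
  refine ⟨x, y, ?_⟩
  funext n
  have hxl : x.toList.length = N := by simp [hx]
  have hyl : y.toList.length = p := by simp [hy]
  unfold upSeq
  split_ifs with hn
  · simp [hx]
  · simp only [List.get_eq_getElem, hy, List.getElem_map, List.getElem_range, hxl]
    simp only [List.length_map, List.length_range]
    have e := Nat.mod_add_div (n - N) p
    rw [← per h ((n - N) / p) _ (by omega)]
    congr 1
    rw [Nat.mul_comm]
    omega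

theorem exists_up {A : Type} {L : (ℕ → A) → Prop} (hL : Recog L) (R : A → A → Prop)
    {s t : ℕ → A} (hs : IsUP s) (ht : L t) (hR : ∀ n, R (s n) (t n)) :
    ∃ t', IsUP t' ∧ L t' ∧ ∀ n, R (s n) (t' n) := by
  obtain ⟨C, _, h, hl, hr⟩ := hL
  obtain ⟨N, p, hN, hp, hper⟩ := hs
  obtain ⟨g, c, hg, hc⟩ := mono_path
    (fun i j => h ((N + j * p) - (N + i * p)) (fun u => t ((N + i * p) + u)))
  have hg01 : g 0 < g 1 := hg (by omega)
  obtain ⟨M, hM⟩ : ∃ M, M = N + g 0 * p := ⟨_, rfl⟩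
  obtain ⟨d, hd⟩ : ∃ d, g 1 = g 0 + d := ⟨g 1 - g 0, by omega⟩
  have hd0 : 0 < d := by omega
  have hq : 0 < d * p := Nat.mul_pos hd0 hp
  have hc0 := hc 0
  have e1 : (N + g (0+1) * p) - (N + g 0 * p) = d * p := by
    rw [zero_add, hd, Nat.add_mul]; omega
  rw [e1, ← hM] at hc0
  let t' : ℕ → A := fun n => if n < M then t n else t (M + (n - M) % (d * p))
  refine ⟨t', ⟨M, d * p, by omega, hq, ?_⟩, ?_, ?_⟩
  · intro n hn
    simp only [t']
    rw [if_neg (by omega), if_neg (by omega), Nat.sub_add_comm hn, Nat.add_mod_right]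
  · let f : ℕ → ℕ := fun i => Nat.casesOn i 0 fun i => N + g i * p
    let f' : ℕ → ℕ := fun i => Nat.casesOn i 0 fun i => M + i * (d * p)
    refine hr t t' f f' (strictMono_nat_of_lt_succ ?_) (strictMono_nat_of_lt_succ ?_) rfl rfl ?_ ht
    · rintro (_ | i)
      · show 0 < N + _
        omega
      · show N + g i * p < N + g (i+1) * p
        have := Nat.mul_lt_mul_of_pos_right (hg (Nat.lt_succ_self i)) hp
        exact Nat.add_lt_add_left this N
    · rintro (_ | i)
      · show 0 < M + _
        omega
      · show M + i * (d * p) < M + (i+1) * (d * p)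
        rw [Nat.succ_mul]; omega
    · rintro (_ | i)
      · show h (N + g 0 * p - 0) (fun u => t (0 + u)) = h (M + 0 * (d * p) - 0) (fun u => t' (0 + u))
        rw [← hM, Nat.zero_mul]
        refine hl _ _ _ fun u hu => ?_
        simp only [t']
        rw [if_pos (by omega)]
      · refine (hc i).trans (hc0.symm.trans ?_)
        show _ = h (M + (i+1) * (d * p) - (M + i * (d * p))) (fun u => t' (M + i * (d * p) + u))
        have : M + (i+1) * (d * p) - (M + i * (d * p)) = d * p := by rw [Nat.succ_mul]; omega
        rw [this]
        refine hl _ _ _ fun u hu => ?_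
        simp only [t']
        rw [if_neg (by omega)]
        have : M + i * (d * p) + u - M = u + i * (d * p) := by omega
        rw [this, Nat.add_mul_mod_self_right, Nat.mod_eq_of_lt hu]
  · intro n
    simp only [t']
    split_ifs with hn
    · exact hR n
    · have e := Nat.mod_add_div (n - M) (d * p)
      have e2 : n = M + (n - M) % (d * p) + ((n - M) / (d * p) * d) * p := by
        have : (n - M) / (d * p) * d * p = d * p * ((n - M) / (d * p)) := by ring
        omega
      have e3 : s n = s (M + (n - M) % (d * p)) := by
        conv_lhs => rw [e2]
        exact per hper _ _ (by omega)
      rw [e3]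
      exact hR _

theorem sat_iff_satUP {V : Type} (φ : MinForm V) :
    ∀ x y, Sat (upSeq x y) φ ↔ SatUP φ x y := by
  induction φ with
  | less X Y => intro x y; rfl
  | incl X Y => intro x y; rfl
  | conj φ ψ ih1 ih2 => intro x y; exact and_congr (ih1 x y) (ih2 x y)
  | neg φ ih => intro x y; exact not_congr (ih x y)
  | ex X φ ih =>
    intro x y
    constructor
    · rintro ⟨τ, hτ, hZ⟩
      obtain ⟨τ', h1, h2, h3⟩ := exists_up (recog_sat φ)
        (fun a b => ∀ Z, Z ≠ X → (Z ∈ a ↔ Z ∈ b)) (isUP_upSeq x y) hτ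
        (fun n Z hz => hZ Z hz n)
      obtain ⟨u, v, rfl⟩ := h1.exists_upSeq
      exact ⟨u, v, (ih u v).1 h2, fun Z hz n => h3 n Z hz⟩
    · rintro ⟨u, v, h1, h2⟩
      exact ⟨upSeq u v, (ih u v).2 h1, h2⟩

/-- A formula of minimal S1S is satisfiable under AS semantics iff it is
satisfiable under UP semantics. -/
theorem as_satisfiable_iff_up_satisfiable {V : Type} [Fintype V] (φ : MinForm V) :
    (∃ σ : ℕ → Set V, Sat σ φ) ↔ ∃ x y : NStr (Set V), SatUP φ x y := by
  constructor
  · rintro ⟨σ, hσ⟩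
    obtain ⟨τ, h1, h2, -⟩ := exists_up (recog_sat φ) (fun _ _ => True)
      (s := fun _ => ∅) ⟨1, 1, by omega, by omega, fun _ _ => rfl⟩ hσ (fun _ => trivial)
    obtain ⟨u, v, rfl⟩ := h1.exists_upSeq
    exact ⟨u, v, (sat_iff_satUP φ u v).1 h2⟩
  · rintro ⟨x, y, h⟩
    exact ⟨upSeq x y, (sat_iff_satUP φ x y).2 h⟩

end Buechi
end
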